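/- There exist constants C and D such that for every finite solvable group G and every irreducible character χ of G, the derived length of G/Ker(χ) is at most C·η(χ) + D. -/

import Mathlib

open scoped Classical BigOperators

/-- Inner product of class functions on a finite group. -/
noncomputable def charInner (G : Type) [Group G] [Fintype G] (φ ψ : G → ℂ) : ℂ :=
  (Fintype.card G : ℂ)⁻¹ * ∑ g : G, φ g * (starRingEnd ℂ) (ψ g)

/-- `χ` is the character of an irreducible complex representation of `G`. -/
def IsIrrChar (G : Type) [Group G] [Fintype G] (χ : G → ℂ) : Prop :=
  ∃ V : FDRep ℂ G, CategoryTheory.Simple V ∧ V.character = χ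

/-- The number of distinct non-principal irreducible constituents of `χ ⬝ conj χ`. -/
noncomputable def etaChar (G : Type) [Group G] [Fintype G] (χ : G → ℂ) : ℕ :=
  Set.ncard {α : G → ℂ | IsIrrChar G α ∧ α ≠ (fun _ => 1) ∧
    charInner G (fun g => χ g * (starRingEnd ℂ) (χ g)) α ≠ 0}

/-- Kernel of a character, as a set. -/
def charKer (G : Type) [Group G] (χ : G → ℂ) : Set G := {g | χ g = χ 1}

/-- Induced character from a subgroup. -/
noncomputable def indChar (K : Type) [Group K] [Fintype K] (H : Subgroup K) (φ : H → ℂ) :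
    K → ℂ := fun k =>
  (Nat.card H : ℂ)⁻¹ * ∑ x : K, if h : x⁻¹ * k * x ∈ H then φ ⟨x⁻¹ * k * x, h⟩ else 0


/-- Derived length of a group. -/
noncomputable def derivedLength (G : Type) [Group G] : ℕ :=
  sInf {n | derivedSeries G n = ⊥}

/-- A finite group is supersolvable if it has a chain of normal subgroups of `G`
from `⊥` to `⊤` with cyclic factors. -/
def IsSupersolvableGroup (G : Type) [Group G] : Prop :=
  ∃ (n : ℕ) (H : Fin (n + 1) → Subgroup G),
    (∀ i, (H i).Normal) ∧ Monotone H ∧ H 0 = ⊥ ∧ H (Fin.last n) = ⊤ ∧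
    ∀ i : Fin n, ∃ g ∈ H i.succ, H i.succ ≤ H i.castSucc ⊔ Subgroup.zpowers g


section
open scoped Classical BigOperators

namespace EtaDl

section GroupPart

variable {G : Type*} [Group G]

/-- Derived series of a subgroup, inside the ambient group. -/
def dsr (H : Subgroup G) : ℕ → Subgroup G
  | 0 => H
  | n + 1 => ⁅dsr H n, dsr H n⁆

lemma dsr_zero (H : Subgroup G) : dsr H 0 = H := rfl
lemma dsr_succ (H : Subgroup G) (n : ℕ) : dsr H (n+1) = ⁅dsr H n, dsr H n⁆ := rfl

lemma dsr_top (n : ℕ) : dsr (⊤ : Subgroup G) n = derivedSeries G n := by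
  induction n with
  | zero => rfl
  | succ n ih => rw [dsr_succ, ih]; rfl

lemma dsr_mono {H K : Subgroup G} (h : H ≤ K) (n : ℕ) : dsr H n ≤ dsr K n := by
  induction n with
  | zero => exact h
  | succ n ih => exact Subgroup.commutator_mono ih ih

lemma dsr_add (H : Subgroup G) (m n : ℕ) : dsr (dsr H m) n = dsr H (m + n) := by
  induction n with
  | zero => rfl
  | succ n ih => rw [dsr_succ, ih]; rfl

lemma comm_self_le (H : Subgroup G) : ⁅H, H⁆ ≤ H := by
  rw [Subgroup.commutator_le]
  intro a ha b hb
  exact H.mul_mem (H.mul_mem (H.mul_mem ha hb) (H.inv_mem ha)) (H.inv_mem hb)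

lemma dsr_succ_le (H : Subgroup G) (n : ℕ) : dsr H (n+1) ≤ dsr H n := comm_self_le _

lemma dsr_anti (H : Subgroup G) {m n : ℕ} (h : m ≤ n) : dsr H n ≤ dsr H m :=
  antitone_nat_of_succ_le (dsr_succ_le H) h

lemma dsr_le (H : Subgroup G) (n : ℕ) : dsr H n ≤ H := dsr_anti H (Nat.zero_le n)

lemma dsr_normal (H : Subgroup G) [H.Normal] (n : ℕ) : (dsr H n).Normal := by
  induction n with
  | zero => assumption
  | succ n ih => rw [dsr_succ]; infer_instance

lemma map_dsr {G' : Type*} [Group G'] (f : G →* G') (H : Subgroup G) (n : ℕ) :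
    (dsr H n).map f = dsr (H.map f) n := by
  induction n with
  | zero => rfl
  | succ n ih => rw [dsr_succ, Subgroup.map_commutator, ih]; rfl

lemma dsr_eq_bot_of_card [Finite G] [Group.IsSolvable G] (H : Subgroup G) (n : ℕ)
    (h : Nat.card H ≤ 2 ^ n) : dsr H n = ⊥ := by
  induction n generalizing H with
  | zero =>
    rw [dsr_zero]; apply Subgroup.eq_bot_of_card_le; simpa using h
  | succ n ih =>
    have : dsr H (n+1) = dsr (dsr H 1) n := by rw [dsr_add, add_comm]
    rw [this]
    by_cases hb : H = ⊥
    · apply eq_bot_iff.2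
      refine (dsr_le _ _).trans ((dsr_le H 1).trans hb.le)
    apply ih
    have hlt : dsr H 1 < H := Group.IsSolvable.commutator_lt_of_ne_bot hb
    have hd := Subgroup.card_dvd_of_le hlt.le
    obtain ⟨c, hc⟩ := hd
    have h1 : Nat.card H ≠ Nat.card (dsr H 1) := by
      intro he
      exact hlt.ne (Subgroup.eq_of_le_of_card_ge hlt.le he.le)
    have hp : 0 < Nat.card H := Nat.card_pos
    have : 2 ≤ c := by
      rcases c with _ | _ | c
      · omega
      · omega
      · omega
    rw [pow_succ] at h
    nlinarith [Nat.card_pos (α := dsr H 1)]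

/-- A chief factor above `K` below `N`. -/
lemma exists_chief [Finite G] [Group.IsSolvable G] (K N : Subgroup G) [K.Normal] [hN : N.Normal]
    (h : ¬ N ≤ K) : ∃ L : Subgroup G, L.Normal ∧ K < L ∧ L ≤ N ⊔ K ∧ ⁅L, L⁆ ≤ K ∧
      ∀ M : Subgroup G, M.Normal → K ≤ M → M ≤ L → M = K ∨ M = L := by
  let S : Set (Subgroup G) := {L | L.Normal ∧ K < L ∧ L ≤ N ⊔ K}
  have hS : S.Nonempty := ⟨N ⊔ K, inferInstance, by
    refine lt_of_le_of_ne le_sup_right ?_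
    intro he; apply h; rw [he]; exact le_sup_left, le_rfl⟩
  obtain ⟨L, hL⟩ := S.toFinite.exists_minimal hS
  have hmin : ∀ M : Subgroup G, M.Normal → K ≤ M → M ≤ L → M = K ∨ M = L := by
    intro M hM hKM hML
    by_cases hK : M = K
    · left; exact hK
    · right
      exact le_antisymm hML (hL.2 ⟨hM, lt_of_le_of_ne hKM (Ne.symm hK), hML.trans hL.1.2.2⟩ hML)
  refine ⟨L, hL.1.1, hL.1.2.1, hL.1.2.2, ?_, hmin⟩
  haveI := hL.1.1
  rcases hmin (⁅L, L⁆ ⊔ K) inferInstance le_sup_right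
    (sup_le (comm_self_le L) hL.1.2.1.le) with h1 | h1
  · rw [← h1]; exact le_sup_left
  · exfalso
    have hf := congrArg (Subgroup.map (QuotientGroup.mk' K)) h1
    rw [Subgroup.map_sup, Subgroup.map_commutator] at hf
    have hk : Subgroup.map (QuotientGroup.mk' K) K = ⊥ := by
      rw [Subgroup.map_eq_bot_iff]; simp
    rw [hk, sup_bot_eq] at hf
    by_cases hb : Subgroup.map (QuotientGroup.mk' K) L = ⊥
    · rw [Subgroup.map_eq_bot_iff] at hb
      simp at hb
      exact absurd hL.1.2.1 (not_lt_of_ge hb)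
    · exact (Group.IsSolvable.commutator_lt_of_ne_bot hb).ne hf

/-- Permutation step. -/
lemma perm_step (H U L D : Subgroup G) [D.Normal] [L.Normal]
    (hDU : D ≤ U) (hU : ∀ u ∈ U, ∃ l ∈ L, l⁻¹ * u ∈ H)
    (hLL : ⁅L, L⁆ ≤ H.normalCore) (hDL : ⁅D, L⁆ ≤ H) : ⁅D, D⁆ ≤ H.normalCore := by
  have hDL' : ⁅D, L⁆ ≤ H.normalCore := Subgroup.normal_le_normalCore.2 hDL
  apply Subgroup.normal_le_normalCore.2
  rw [Subgroup.commutator_le]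
  intro d hd e he
  obtain ⟨l, hl, h1⟩ := hU _ (hDU (D.inv_mem hd))
  obtain ⟨m, hm, h2⟩ := hU _ (hDU (D.inv_mem he))
  have aux : ∀ d ∈ D, ∀ m ∈ L, m⁻¹ * d⁻¹ * m * d ∈ H := by
    intro d hd m hm
    have := Subgroup.commutator_mem_commutator (D.inv_mem hd) (L.inv_mem hm)
    have h3 := H.inv_mem (hDL this)
    simpa [commutatorElement_def, mul_assoc] using h3
  have auxc : ∀ x ∈ H.normalCore, ∀ y, y⁻¹ * x * y ∈ H := by
    intro x hx y
    have := H.normalCore_normal.conj_mem x hx y⁻¹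
    exact H.normalCore_le (by simpa using this)
  -- d⁻¹ H = l H, e⁻¹ H = m H
  have e1 : (l⁻¹ * m⁻¹) * (e⁻¹ * d⁻¹) ∈ H := by
    have hx : e⁻¹ * l * e * l⁻¹ ∈ H.normalCore := by
      have := Subgroup.commutator_mem_commutator (D.inv_mem he) hl
      simpa [commutatorElement_def, mul_assoc] using hDL' this
    -- e⁻¹ d⁻¹ = e⁻¹ l (l⁻¹ d⁻¹)
    have h3 := auxc _ hx (e⁻¹ * l)
    have h4 := auxc _ hx (m * l)
    have hlm : l⁻¹ * m⁻¹ * l * m ∈ H.normalCore := by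
      have := Subgroup.commutator_mem_commutator (L.inv_mem hl) (L.inv_mem hm)
      simpa [commutatorElement_def, mul_assoc] using hLL this
    have hlm' := H.normalCore_le hlm
    -- l⁻¹ m⁻¹ e⁻¹ d⁻¹ = (l⁻¹ m⁻¹ [e⁻¹,l] m l)(l⁻¹ m⁻¹ l m)(m⁻¹ e⁻¹)(l⁻¹ d⁻¹)  up to conj
    have h5 : l⁻¹ * (m⁻¹ * e⁻¹ * l * e * l⁻¹ * m) * l ∈ H := by
      have := h4; simpa [mul_assoc] using this
    have h6 : l⁻¹ * m⁻¹ * e⁻¹ * d⁻¹ =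
       (l⁻¹ * (m⁻¹ * e⁻¹ * l * e * l⁻¹ * m) * l) * (l⁻¹ * m⁻¹ * l * m) * (m⁻¹ * e⁻¹) *
         (l⁻¹ * d⁻¹) := by group
    have : l⁻¹ * m⁻¹ * e⁻¹ * d⁻¹ ∈ H := by
      rw [h6]
      exact H.mul_mem (H.mul_mem (H.mul_mem h5 hlm') h2) h1
    simpa [mul_assoc] using this
  have e2 : (l⁻¹ * m⁻¹) * (d⁻¹ * e⁻¹) ∈ H := by
    have hx : d⁻¹ * m * d * m⁻¹ ∈ H.normalCore := by
      have := Subgroup.commutator_mem_commutator (D.inv_mem hd) hm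
      simpa [commutatorElement_def, mul_assoc] using hDL' this
    have h4 := auxc _ hx (m * l)
    have h6 : l⁻¹ * m⁻¹ * d⁻¹ * e⁻¹ = ((m * l)⁻¹ * (d⁻¹ * m * d * m⁻¹) * (m * l)) *
        (l⁻¹ * d⁻¹) * (m⁻¹ * e⁻¹) := by group
    have : l⁻¹ * m⁻¹ * d⁻¹ * e⁻¹ ∈ H := by
      rw [h6]
      exact H.mul_mem (H.mul_mem h4 h1) h2
    simpa [mul_assoc] using this
  have := H.mul_mem (H.inv_mem e1) e2
  have h7 : d * e * d⁻¹ * e⁻¹ = ((l⁻¹ * m⁻¹) * (e⁻¹ * d⁻¹))⁻¹ * ((l⁻¹ * m⁻¹) * (d⁻¹ * e⁻¹)) := by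
    group
  rw [commutatorElement_def, h7]; exact this

/-- Generation modulo a subgroup by few elements. -/
lemma exists_gen [Finite G] (n : ℕ) (A F : Subgroup G) (hAF : A ≤ F)
    (h : Nat.card F ≤ 2 ^ n * Nat.card A) :
    ∃ t : Fin n → G, (∀ i, t i ∈ F) ∧ F ≤ A ⊔ Subgroup.closure (Set.range t) := by
  induction n generalizing A with
  | zero =>
    refine ⟨Fin.elim0, fun i => i.elim0, ?_⟩
    have : A = F := Subgroup.eq_of_le_of_card_ge hAF (by simpa using h)
    rw [this]; exact le_sup_left
  | succ n ih =>
    by_cases hFA : F ≤ A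
    · exact ⟨fun _ => 1, fun _ => F.one_mem, hFA.trans le_sup_left⟩
    obtain ⟨x, hxF, hxA⟩ := Set.not_subset.1 hFA
    set A' := A ⊔ Subgroup.zpowers x with hA'
    have hAA' : A ≤ A' := le_sup_left
    have hA'F : A' ≤ F := sup_le hAF (by simpa using hxF)
    have hxA' : x ∈ A' := (le_sup_right : _ ≤ A') (Subgroup.mem_zpowers x)
    obtain ⟨c, hc⟩ := Subgroup.card_dvd_of_le hAA'
    have h1 : Nat.card A' ≠ Nat.card A := by
      intro he
      have := Subgroup.eq_of_le_of_card_ge hAA' he.le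
      exact hxA (by rw [SetLike.mem_coe, this]; exact hxA')
    have hp : 0 < Nat.card A' := Nat.card_pos
    have hc2 : 2 ≤ c := by
      rcases c with _ | _ | c
      · omega
      · omega
      · omega
    obtain ⟨t, htF, ht⟩ := ih A' hA'F (by
      rw [pow_succ] at h
      rw [hc]
      have := Nat.mul_le_mul_left (2 ^ n * Nat.card A) hc2
      nlinarith)
    refine ⟨Fin.cons x t, ?_, ht.trans ?_⟩
    · intro i
      refine Fin.cases ?_ ?_ i
      · simpa using hxF
      · intro j; simpa using htF j
    refine sup_le (sup_le le_sup_left ?_) ?_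
    · refine le_trans ?_ le_sup_right
      rw [Subgroup.zpowers_le]
      exact Subgroup.subset_closure ⟨0, by simp⟩
    · refine le_trans (Subgroup.closure_mono ?_) le_sup_right
      rintro _ ⟨i, rfl⟩
      exact ⟨i.succ, by simp⟩

/-- Counting by the conjugation action on generators. -/
lemma card_le_of_gen [Finite G] (P F A : Subgroup G) (m : ℕ) (t : Fin m → G)
    (ht : ∀ i, t i ∈ F) (hPF : ∀ p ∈ P, ∀ f ∈ F, p * f * p⁻¹ ∈ F)
    (hc : ∀ p ∈ P, (∀ i, p * t i * p⁻¹ = t i) → p ∈ A) :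
    Nat.card P ≤ Nat.card F ^ m * Nat.card A := by
  let f : P → (Fin m → F) := fun p i => ⟨p * t i * (p : G)⁻¹, hPF p p.2 _ (ht i)⟩
  have : Fintype G := Fintype.ofFinite G
  have key : ∀ y ∈ (Finset.univ : Finset (Fin m → F)),
      ((Finset.univ : Finset P).filter (fun p => f p = y)).card ≤ Nat.card A := by
    intro y _
    by_cases hy : ∃ p0 : P, f p0 = y
    · obtain ⟨p0, hp0⟩ := hy
      rw [Nat.card_eq_fintype_card, ← Finset.card_univ]
      refine Finset.card_le_card_of_injOn
        (fun p => if h : (p0 : G)⁻¹ * p ∈ A then ⟨(p0 : G)⁻¹ * p, h⟩ else 1)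
        (fun _ _ => Finset.mem_coe.2 (Finset.mem_univ _)) ?_
      have hmem : ∀ p : P, f p = y → (p0 : G)⁻¹ * p ∈ A := by
        intro p hp
        apply hc _ (P.mul_mem (P.inv_mem p0.2) p.2)
        intro i
        have h1 := congrArg Subtype.val (congrFun (hp.trans hp0.symm) i)
        simp only [f] at h1
        calc (p0 : G)⁻¹ * p * t i * ((p0 : G)⁻¹ * p)⁻¹
            = (p0 : G)⁻¹ * (p * t i * (p : G)⁻¹) * p0 := by group
          _ = t i := by rw [h1]; group
      intro p hp q hq hpq
      have hp' := hmem p (by simpa using hp)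
      have hq' := hmem q (by simpa using hq)
      simp only [hp', hq', dif_pos, Subtype.mk.injEq] at hpq
      exact Subtype.ext (mul_left_cancel hpq)
    · have : ((Finset.univ : Finset P).filter (fun p => f p = y)) = ∅ := by
        rw [Finset.filter_eq_empty_iff]
        intro p _ hp; exact hy ⟨p, hp⟩
      rw [this]; simp
  have := Finset.card_le_mul_card_image_of_maps_to (f := f)
    (s := (Finset.univ : Finset P)) (t := Finset.univ) (fun _ _ => Finset.mem_univ _)
    (Nat.card A) key
  simp only [Finset.card_univ, Fintype.card_pi, Finset.prod_const, Fintype.card_fin] at this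
  simp only [Nat.card_eq_fintype_card] at *
  rw [mul_comm]; exact this

lemma map_dsr_eq_bot_of_card {G' : Type*} [Group G'] [Finite G'] [Group.IsSolvable G]
    (f : G →* G') (H : Subgroup G) (n : ℕ)
    (h : Nat.card (H.map f) ≤ 2 ^ n) : (dsr H n).map f = ⊥ := by
  haveI : Group.IsSolvable f.range := Group.isSolvable_of_surjective f.rangeRestrict_surjective
  have h1 : (H.map f.rangeRestrict).map f.range.subtype = H.map f := by
    rw [Subgroup.map_map]; rfl
  have h2 : Nat.card (H.map f.rangeRestrict) = Nat.card (H.map f) := by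
    rw [← h1]
    exact (Nat.card_congr ((H.map f.rangeRestrict).equivMapOfInjective f.range.subtype
      f.range.subtype_injective).toEquiv)
  have h3 := dsr_eq_bot_of_card (H.map f.rangeRestrict) n (by rw [h2]; exact h)
  rw [← map_dsr] at h3
  have h4 : ((dsr H n).map f.rangeRestrict).map f.range.subtype = (dsr H n).map f := by
    rw [Subgroup.map_map]; rfl
  rw [← h4, h3, Subgroup.map_bot]

lemma card_mulAut_le (M : Type*) [Group M] [Finite M] (n : ℕ) (h : Nat.card M ≤ 2 ^ n) :
    Nat.card (MulAut M) ≤ 2 ^ (n * n) := by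
  obtain ⟨t, -, ht⟩ := exists_gen (G := M) n ⊥ ⊤ bot_le (by simpa using h)
  rw [bot_sup_eq] at ht
  have hinj : Function.Injective (fun (σ : MulAut M) (i : Fin n) => σ (t i)) := by
    intro σ τ hst
    have : σ.toMonoidHom = τ.toMonoidHom := by
      exact MonoidHom.eq_of_eqOn_dense (top_le_iff.1 ht) (by rintro _ ⟨i, rfl⟩; exact congrFun hst i)
    ext x
    exact DFunLike.congr_fun this x
  have := Nat.card_le_card_of_injective _ hinj
  refine this.trans ?_
  rw [Nat.card_fun, pow_mul]
  simpa using Nat.pow_le_pow_left h n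

/-- A solvable group acting on a small group. -/
lemma dsr_centralize [Finite G] [Group.IsSolvable G] (P A : Subgroup G) (n : ℕ)
    (hP : ∀ p ∈ P, ∀ a ∈ A, p * a * p⁻¹ ∈ A) (hA : Nat.card A ≤ 2 ^ n) :
    ∀ p ∈ dsr P (n * n), ∀ a ∈ A, p * a = a * p := by
  have hPN : P ≤ Subgroup.normalizer (A : Set G) := by
    intro p hp
    rw [Subgroup.mem_normalizer_iff]
    intro a
    refine ⟨hP p hp a, fun h => ?_⟩
    have := hP p⁻¹ (P.inv_mem hp) _ h
    simpa [mul_assoc] using this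
  set Nn := Subgroup.normalizer (A : Set G) with hNn
  have h1 : (P.subgroupOf Nn).map Nn.subtype = P := by
    rw [Subgroup.subgroupOf_map_subtype]; exact inf_eq_left.2 hPN
  have h2 := map_dsr_eq_bot_of_card A.normalizerMonoidHom (P.subgroupOf Nn) (n * n)
    ((Subgroup.card_le_card_group _).trans (card_mulAut_le A n hA))
  intro p hp a ha
  rw [← h1, ← map_dsr] at hp
  obtain ⟨q, hq, rfl⟩ := hp
  rw [Subgroup.map_eq_bot_iff, Subgroup.normalizerMonoidHom_ker] at h2
  have := h2 hq
  rw [Subgroup.mem_subgroupOf, Subgroup.mem_centralizer_iff] at this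
  exact (this a ha).symm

/-- A solvable group acting on a small section. -/
lemma dsr_centralize_section [Finite G] [Group.IsSolvable G] (P A B : Subgroup G) (n : ℕ)
    (hBA : B ≤ A) (hAB : ∀ a ∈ A, ∀ b ∈ B, a * b * a⁻¹ ∈ B)
    (hP : ∀ p ∈ P, ∀ a ∈ A, p * a * p⁻¹ ∈ A) (hPB : ∀ p ∈ P, ∀ b ∈ B, p * b * p⁻¹ ∈ B)
    (hA : Nat.card A ≤ 2 ^ n * Nat.card B) :
    ⁅dsr P (n * n), A⁆ ≤ B := by
  have hN : ∀ Q : Subgroup G, (∀ p ∈ Q, ∀ b ∈ B, p * b * p⁻¹ ∈ B) →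
      Q ≤ Subgroup.normalizer (B : Set G) := by
    intro Q hQ p hp
    rw [Subgroup.mem_normalizer_iff]
    intro a
    refine ⟨hQ p hp a, fun h => ?_⟩
    have := hQ p⁻¹ (Q.inv_mem hp) _ h
    simpa [mul_assoc] using this
  have hPN := hN P hPB
  have hAN := hN A hAB
  set Nn := Subgroup.normalizer (B : Set G) with hNn
  have hBN : B ≤ Nn := hBA.trans hAN
  haveI hBn : (B.subgroupOf Nn).Normal := Subgroup.normal_in_normalizer
  let π := QuotientGroup.mk' (B.subgroupOf Nn)
  have hπ : ∀ x, π x = 1 ↔ (x : G) ∈ B := by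
    intro x
    simp only [π, QuotientGroup.mk'_apply, QuotientGroup.eq_one_iff, Subgroup.mem_subgroupOf]
  have hcard : Nat.card ((A.subgroupOf Nn).map π) ≤ 2 ^ n := by
    have h1 : Nat.card ((A.subgroupOf Nn).map π) * Nat.card B = Nat.card A := by
      let g : A →* (A.subgroupOf Nn).map π :=
        { toFun := fun a => ⟨π ⟨a, hAN a.2⟩, Subgroup.mem_map_of_mem π (by
            rw [Subgroup.mem_subgroupOf]; exact a.2)⟩
          map_one' := by ext; exact map_one π
          map_mul' := fun a b => by
            ext
            exact map_mul π ⟨a, hAN a.2⟩ ⟨b, hAN b.2⟩ }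
      have hg : Function.Surjective g := by
        rintro ⟨y, x, hx, rfl⟩
        exact ⟨⟨x, by simpa [Subgroup.mem_subgroupOf] using hx⟩, rfl⟩
      have hk : g.ker = B.subgroupOf A := by
        ext a
        rw [MonoidHom.mem_ker, Subgroup.mem_subgroupOf, ← hπ ⟨a, hAN a.2⟩, Subtype.ext_iff]
        rfl
      have h2 := g.ker.card_mul_index
      rw [Subgroup.index_ker, hk, MonoidHom.range_eq_top.2 hg,
        Nat.card_congr (Subgroup.subgroupOfEquivOfLe hBA).toEquiv] at h2
      rw [← h2, mul_comm]
      simp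
    have hp : 0 < Nat.card B := Nat.card_pos
    rw [← h1] at hA
    exact Nat.le_of_mul_le_mul_right hA hp
  have key := dsr_centralize ((P.subgroupOf Nn).map π) ((A.subgroupOf Nn).map π) n (by
    rintro _ ⟨p, hp, rfl⟩ _ ⟨a, ha, rfl⟩
    refine ⟨p * a * p⁻¹, ?_, by simp⟩
    simp only [SetLike.mem_coe, Subgroup.mem_subgroupOf] at hp ha ⊢
    exact hP _ hp _ ha) hcard
  rw [Subgroup.commutator_le]
  intro p hp a ha
  have h1 : (P.subgroupOf Nn).map Nn.subtype = P := by
    rw [Subgroup.subgroupOf_map_subtype]; exact inf_eq_left.2 hPN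
  rw [← h1, ← map_dsr] at hp
  obtain ⟨q, hq, rfl⟩ := hp
  have h3 := key (π q) (by rw [← map_dsr]; exact Subgroup.mem_map_of_mem π hq) (π ⟨a, hAN ha⟩)
    (Subgroup.mem_map_of_mem π (by rw [Subgroup.mem_subgroupOf]; exact ha))
  have h4 : π (q * ⟨a, hAN ha⟩ * q⁻¹ * (⟨a, hAN ha⟩)⁻¹) = 1 := by
    rw [map_mul, map_mul, map_mul, h3, map_inv, map_inv]; group
  rw [hπ] at h4
  simpa [commutatorElement_def] using h4

end GroupPart

end EtaDl

end

section
open scoped Classical BigOperators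
namespace EtaDl
section PermPart
variable {G : Type*} [Group G]

lemma num_bound (b : ℕ) (hb : 2 ≤ b) :
    (Nat.log 2 b + 1) * (Nat.log 2 b + 1) + 1 ≤ 9 * (b - 1) := by
  obtain ⟨n, hn⟩ : ∃ n, Nat.log 2 b = n := ⟨_, rfl⟩
  have h1 : 2 ^ n ≤ b := by rw [← hn]; exact Nat.pow_log_le_self 2 (by omega)
  have hn1 : 1 ≤ n := by rw [← hn]; exact Nat.log_pos (by norm_num) hb
  rw [hn]
  have key : ∀ m : ℕ, 1 ≤ m → (m + 1) * (m + 1) + 1 + 9 ≤ 9 * 2 ^ m := by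
    intro m hm
    induction m, hm using Nat.le_induction with
    | base => norm_num
    | succ m hm ih => rw [pow_succ]; nlinarith
  have := key n hn1
  omega

/-- One covering step. -/
lemma cover_step [Finite G] [Group.IsSolvable G] (U U' : Subgroup G) (hc : U ⋖ U')
    (hN : ¬ U'.normalCore ≤ U) :
    ∃ L : Subgroup G, L.Normal ∧ U.normalCore < L ∧ L ≤ U'.normalCore ∧ ⁅L, L⁆ ≤ U.normalCore ∧
      (∀ M : Subgroup G, M.Normal → U.normalCore ≤ M → M ≤ L → M = U.normalCore ∨ M = L) ∧
      (∀ u ∈ U', ∃ l ∈ L, l⁻¹ * u ∈ U) ∧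
      (∀ u ∈ U', ∀ x ∈ L ⊓ U, u * x * u⁻¹ ∈ L ⊓ U) ∧ ¬ L ≤ U := by
  have hcore : U.normalCore ≤ U'.normalCore := Subgroup.normalCore_mono hc.le
  obtain ⟨L, hLn, hKL, hLN, hLL, hmin⟩ := exists_chief U.normalCore U'.normalCore
    (fun h => hN (h.trans U.normalCore_le))
  rw [sup_eq_left.2 hcore] at hLN
  have hLU : ¬ L ≤ U := fun h => absurd (Subgroup.normal_le_normalCore.2 h) (not_le_of_gt hKL)
  have hsup : L ⊔ U = U' := by
    rcases hc.eq_or_eq (c := L ⊔ U) le_sup_right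
      (sup_le (hLN.trans U'.normalCore_le) hc.le) with h | h
    · exact absurd (le_sup_left.trans h.le) hLU
    · exact h
  have hfac : ∀ u ∈ U', ∃ l ∈ L, l⁻¹ * u ∈ U := by
    intro u hu
    rw [← hsup, ← SetLike.mem_coe, Subgroup.normal_mul] at hu
    obtain ⟨l, hl, v, hv, rfl⟩ := hu
    exact ⟨l, hl, by simpa using hv⟩
  refine ⟨L, hLn, hKL, hLN, hLL, hmin, hfac, ?_, hLU⟩
  intro u hu x hx
  refine ⟨hLn.conj_mem _ hx.1 _, ?_⟩
  obtain ⟨l, hl, h⟩ := hfac u hu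
  set v := l⁻¹ * u with hv
  have hu' : u = l * v := by rw [hv]; group
  have hy : v * x * v⁻¹ ∈ U := U.mul_mem (U.mul_mem h hx.2) (U.inv_mem h)
  have hyL : v * x * v⁻¹ ∈ L := hLn.conj_mem _ hx.1 _
  have h3 := U.normalCore_le (hLL (Subgroup.commutator_mem_commutator hl hyL))
  have := U.mul_mem h3 hy
  rw [commutatorElement_def] at this
  rw [hu']
  have e : l * v * x * (l * v)⁻¹ =
    l * (v * x * v⁻¹) * l⁻¹ * (v * x * v⁻¹)⁻¹ * (v * x * v⁻¹) := by group
  rw [e]; exact this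

lemma perm_bound [Finite G] [Group.IsSolvable G] (H : Subgroup G) :
    dsr (⊤ : Subgroup G) (9 * (H.index - 1)) ≤ H.normalCore := by
  induction hi : H.index using Nat.strong_induction_on generalizing H with
  | _ k ih =>
  by_cases hT : H = ⊤
  · subst hT
    refine le_top.trans ?_
    exact Subgroup.normal_le_normalCore.2 le_rfl
  obtain ⟨U, hcov, -⟩ := exists_covBy_le_of_lt (lt_top_iff_ne_top.2 hT)
  have hrel := Subgroup.relIndex_mul_index hcov.le
  have hU0 : 0 < U.index := Nat.pos_of_ne_zero Subgroup.index_ne_zero_of_finite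
  have hr0 : H.relIndex U ≠ 0 := by
    intro h; rw [h, zero_mul] at hrel; exact Subgroup.index_ne_zero_of_finite hrel.symm
  have hr1 : H.relIndex U ≠ 1 := by
    intro h
    exact absurd (Subgroup.relIndex_eq_one.1 h) (not_le_of_gt hcov.lt)
  have hb : 2 ≤ H.relIndex U := by omega
  obtain ⟨b, hbe⟩ : ∃ b, H.relIndex U = b := ⟨_, rfl⟩
  rw [hbe] at hrel hb
  have hlt : U.index < k := by rw [← hi, ← hrel]; nlinarith
  have h1 := ih U.index hlt U rfl
  have hnum := num_bound b hb
  set n := Nat.log 2 b + 1 with hn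
  have hle : 9 * (U.index - 1) + (n * n + 1) ≤ 9 * (k - 1) := by
    have : U.index + b ≤ k + 1 := by rw [← hi, ← hrel]; nlinarith
    omega
  by_cases hN : U.normalCore ≤ H
  · exact ((dsr_anti _ (by omega)).trans h1).trans (Subgroup.normal_le_normalCore.2 hN)
  obtain ⟨L, hLn, hKL, hLN, hLL, -, hfac, hnorm, hLU⟩ := cover_step H U hcov hN
  have hcard : Nat.card L ≤ 2 ^ n * Nat.card (L ⊓ H : Subgroup G) := by
    have h2 : (L ⊓ H).relIndex L ≤ b := by
      rw [Subgroup.inf_relIndex_left, ← hbe]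
      exact Subgroup.relIndex_le_of_le_right (hLN.trans U.normalCore_le) hr0
    have h3 := Subgroup.card_mul_index ((L ⊓ H).subgroupOf L)
    rw [Nat.card_congr (Subgroup.subgroupOfEquivOfLe (inf_le_left : L ⊓ H ≤ L)).toEquiv] at h3
    have h4 : b ≤ 2 ^ n := (Nat.lt_pow_succ_log_self (by norm_num) b).le
    rw [← h3, mul_comm]
    exact Nat.mul_le_mul_right _ (h2.trans h4)
  have hcs := dsr_centralize_section U.normalCore L (L ⊓ H) n inf_le_left
    (fun a ha x hx => hnorm a (U.normalCore_le (hLN ha)) x hx)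
    (fun p _ a ha => hLn.conj_mem _ ha _)
    (fun p hp x hx => hnorm p (U.normalCore_le hp) x hx) hcard
  haveI := dsr_normal U.normalCore (n * n)
  have hps := perm_step H U L (dsr U.normalCore (n * n)) ((dsr_le _ _).trans U.normalCore_le)
    hfac hLL (hcs.trans inf_le_right)
  refine (dsr_anti _ hle).trans ?_
  rw [← dsr_add]
  exact (dsr_mono h1 _).trans hps

end PermPart
end EtaDl

end

section
open scoped Classical BigOperators
namespace EtaDl
section Blocks
variable {R : Type*} [CommRing R] {G : Type*} [Group G] {M : Type*} [AddCommGroup M] [Module R M]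
  (ρ : Representation R G M)

/-- translate of a submodule -/
def tr (g : G) (W : Submodule R M) : Submodule R M := W.map (ρ g)

variable {ρ}
lemma tr_one (W : Submodule R M) : tr ρ 1 W = W := by
  unfold tr; rw [map_one]; exact Submodule.map_id W
lemma tr_mul (g h : G) (W : Submodule R M) : tr ρ (g * h) W = tr ρ g (tr ρ h W) := by
  unfold tr; rw [map_mul]; exact Submodule.map_comp _ _ _
lemma tr_inv_tr (g : G) (W : Submodule R M) : tr ρ g⁻¹ (tr ρ g W) = W := by
  rw [← tr_mul, inv_mul_cancel, tr_one]
lemma tr_tr_inv (g : G) (W : Submodule R M) : tr ρ g (tr ρ g⁻¹ W) = W := by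
  rw [← tr_mul, mul_inv_cancel, tr_one]
lemma tr_mono (g : G) {W W' : Submodule R M} (h : W ≤ W') : tr ρ g W ≤ tr ρ g W' :=
  Submodule.map_mono h
lemma tr_inj (g : G) {W W' : Submodule R M} (h : tr ρ g W = tr ρ g W') : W = W' := by
  rw [← tr_inv_tr (ρ := ρ) g W, h, tr_inv_tr]
lemma tr_iSup {ι : Sort*} (g : G) (W : ι → Submodule R M) :
    tr ρ g (⨆ i, W i) = ⨆ i, tr ρ g (W i) := Submodule.map_iSup _ _
lemma tr_bot (g : G) : tr ρ g ⊥ = ⊥ := Submodule.map_bot _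
lemma mem_tr {g : G} {W : Submodule R M} {v : M} (h : v ∈ W) : ρ g v ∈ tr ρ g W :=
  Submodule.mem_map_of_mem h
lemma tr_inf (g : G) (W W' : Submodule R M) : tr ρ g (W ⊓ W') = tr ρ g W ⊓ tr ρ g W' := by
  apply le_antisymm
  · exact le_inf (tr_mono g inf_le_left) (tr_mono g inf_le_right)
  · rw [← tr_tr_inv (ρ := ρ) g (tr ρ g W ⊓ tr ρ g W')]
    apply tr_mono
    apply le_inf
    · conv_rhs => rw [← tr_inv_tr (ρ := ρ) g W]
      exact tr_mono _ inf_le_left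
    · conv_rhs => rw [← tr_inv_tr (ρ := ρ) g W']
      exact tr_mono _ inf_le_right

variable (ρ)
/-- stabilizer of a submodule -/
def stab (W : Submodule R M) : Subgroup G where
  carrier := {g | tr ρ g W = W}
  one_mem' := tr_one W
  mul_mem' := by
    intro a b ha hb
    simp only [Set.mem_setOf_eq] at *
    rw [tr_mul, hb, ha]
  inv_mem' := by
    intro a ha
    simp only [Set.mem_setOf_eq] at *
    conv_lhs => rw [← ha]
    exact tr_inv_tr a W

variable {ρ}
lemma mem_stab {g : G} {W : Submodule R M} : g ∈ stab ρ W ↔ tr ρ g W = W := Iff.rfl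

variable (ρ)
/-- sum of translates of `X` different from `W` -/
def Yc (X W : Submodule R M) : Submodule R M := ⨆ (g : G) (_ : tr ρ g X ≠ W), tr ρ g X

/-- blocks -/
def IsBlock (W : Submodule R M) : Prop := W ≠ ⊥ ∧ Disjoint W (Yc ρ W W)

variable {ρ}
lemma tr_Yc (h : G) (X W : Submodule R M) : tr ρ h (Yc ρ X W) = Yc ρ X (tr ρ h W) := by
  have key : ∀ (h : G) (W : Submodule R M), tr ρ h (Yc ρ X W) ≤ Yc ρ X (tr ρ h W) := by
    intro h W
    unfold Yc
    rw [tr_iSup]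
    refine iSup_le fun g => ?_
    rw [tr_iSup]
    refine iSup_le fun hg => ?_
    rw [← tr_mul]
    refine le_iSup₂_of_le (h * g) ?_ le_rfl
    rw [tr_mul]
    exact fun he => hg (tr_inj h he)
  apply le_antisymm (key h W)
  have := tr_mono (ρ := ρ) h (key h⁻¹ (tr ρ h W))
  rwa [tr_tr_inv, tr_inv_tr] at this

lemma IsBlock.disj {X : Submodule R M} (hX : IsBlock ρ X) (g : G) :
    Disjoint (tr ρ g X) (Yc ρ X (tr ρ g X)) := by
  rw [← tr_Yc, disjoint_iff, ← tr_inf, disjoint_iff.1 hX.2, tr_bot]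

lemma IsBlock.refine {X W : Submodule R M} (hX : IsBlock ρ X) (hWX : W ≤ X) (hW : W ≠ ⊥)
    (h : Disjoint W (⨆ (g : G) (_ : tr ρ g X = X ∧ tr ρ g W ≠ W), tr ρ g W)) : IsBlock ρ W := by
  refine ⟨hW, ?_⟩
  set A := ⨆ (g : G) (_ : tr ρ g X = X ∧ tr ρ g W ≠ W), tr ρ g W with hA
  have hAX : A ≤ X := by
    refine iSup₂_le fun g hg => ?_
    rw [← hg.1]; exact tr_mono g hWX
  have hle : Yc ρ W W ≤ A ⊔ Yc ρ X X := by
    refine iSup₂_le fun g hg => ?_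
    by_cases hgX : tr ρ g X = X
    · exact le_sup_of_le_left (le_iSup₂_of_le g ⟨hgX, hg⟩ le_rfl)
    · exact le_sup_of_le_right ((tr_mono g hWX).trans (le_iSup₂_of_le g hgX le_rfl))
  refine Disjoint.mono_right hle ?_
  exact h.disjoint_sup_right_of_disjoint_sup_left (hX.2.mono_left (sup_le hWX hAX))

lemma exists_min_block [Nontrivial M] [IsArtinian R M] (ρ : Representation R G M) :
    ∃ X : Submodule R M, IsBlock ρ X ∧ ∀ W, IsBlock ρ W → W ≤ X → W = X := by
  have hne : ({X | IsBlock ρ X} : Set (Submodule R M)).Nonempty := by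
    refine ⟨⊤, top_ne_bot, ?_⟩
    have : Yc ρ (⊤ : Submodule R M) ⊤ = ⊥ := by
      rw [eq_bot_iff]
      refine iSup₂_le fun g hg => ?_
      exact absurd (top_le_iff.1 (by
        have := tr_mono (ρ := ρ) g (le_top : tr ρ g⁻¹ ⊤ ≤ ⊤)
        rwa [tr_tr_inv] at this)) hg
    rw [this]; exact disjoint_bot_right
  obtain ⟨X, hX, hmin⟩ := wellFounded_lt.has_min _ hne
  refine ⟨X, hX, fun W hW hle => ?_⟩
  by_contra hc
  exact hmin W hW (lt_of_le_of_ne hle hc)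

/-- irreducibility, via invariant submodules -/
def Irr (ρ : Representation R G M) : Prop :=
  Nontrivial M ∧ ∀ W : Submodule R M, (∀ g, tr ρ g W ≤ W) → W = ⊥ ∨ W = ⊤

lemma Irr.iSup_tr (h : Irr ρ) {W : Submodule R M} (hW : W ≠ ⊥) : ⨆ g, tr ρ g W = ⊤ := by
  rcases h.2 (⨆ g, tr ρ g W) (by
    intro g
    rw [tr_iSup]
    refine iSup_le fun h => ?_
    rw [← tr_mul]; exact le_iSup (fun g => tr ρ g W) _) with h1 | h1
  · exfalso
    apply hW
    rw [eq_bot_iff, ← h1]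
    conv_lhs => rw [← tr_one (ρ := ρ) W]
    exact le_iSup (fun g => tr ρ g W) _
  · exact h1

lemma Irr.isCompl (h : Irr ρ) {X : Submodule R M} (hX : IsBlock ρ X) : IsCompl X (Yc ρ X X) := by
  refine ⟨hX.2, ?_⟩
  rw [codisjoint_iff, eq_top_iff, ← h.iSup_tr hX.1]
  refine iSup_le fun g => ?_
  by_cases hg : tr ρ g X = X
  · rw [hg]; exact le_sup_left
  · exact le_sup_of_le_right (le_iSup₂_of_le g hg le_rfl)

lemma index_stab [Finite G] (X : Submodule R M) :
    (stab ρ X).index = (Set.range (fun g => tr ρ g X)).ncard := by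
  letI : MulAction G (Submodule R M) :=
    { smul := fun g W => tr ρ g W, one_smul := tr_one, mul_smul := tr_mul }
  have h1 : stab ρ X = MulAction.stabilizer G X := by
    ext g; rw [mem_stab, MulAction.mem_stabilizer_iff]; rfl
  rw [h1, MulAction.index_stabilizer]
  rfl

/-- `IsBlock`: elements moved inside the block stabilise it. -/
lemma IsBlock.mem_stab {X : Submodule R M} (hX : IsBlock ρ X) {g : G} {v : M} (hv : v ∈ X)
    (hv0 : v ≠ 0) (hg : ρ g v ∈ X) : g ∈ stab ρ X := by
  by_contra hc
  have h1 : ρ g v ∈ Yc ρ X X := (le_iSup₂_of_le (f := fun g (_ : tr ρ g X ≠ X) => tr ρ g X)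
    g hc le_rfl) (mem_tr hv)
  have h2 := (Submodule.disjoint_def.1 hX.2) _ hg h1
  apply hv0
  have := congrArg (ρ g⁻¹) h2
  rwa [map_zero, ← Module.End.mul_apply, ← map_mul, inv_mul_cancel, map_one] at this

/-- number of translates bounded by number of orbits -/
lemma index_le_orbits [Finite G] {X : Submodule R M} (hX : IsBlock ρ X) (S : Finset M)
    (hS : ∀ v : M, v ≠ 0 → ∃ s ∈ S, ∃ g, ρ g s = v) : (stab ρ X).index ≤ S.card := by
  rw [index_stab]
  set I := Set.range (fun g => tr ρ g X) with hI
  have hIfin : I.Finite := Set.finite_range _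
  let J := hIfin.toFinset
  have hJ : I.ncard = J.card := Set.ncard_eq_toFinset_card I hIfin
  have memJ : ∀ g, tr ρ g X ∈ J := fun g => hIfin.mem_toFinset.2 ⟨g, rfl⟩
  have exJ : ∀ W ∈ J, ∃ g, tr ρ g X = W := fun W hW => hIfin.mem_toFinset.1 hW
  let supp : M → Finset (Submodule R M) := fun v => J.filter (fun W => v ∉ Yc ρ X W)
  -- invariance
  have hinv : ∀ g v, (supp v).card ≤ (supp (ρ g v)).card := by
    intro g v
    refine Finset.card_le_card_of_injOn (fun W => tr ρ g W) ?_ (fun a _ b _ h => tr_inj g h)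
    intro W hW
    simp only [supp, Finset.coe_filter, Set.mem_setOf_eq] at hW ⊢
    obtain ⟨h, rfl⟩ := exJ W hW.1
    refine ⟨by rw [← tr_mul]; exact memJ _, fun hc => hW.2 ?_⟩
    rw [← tr_Yc] at hc
    have := mem_tr (ρ := ρ) (g := g⁻¹) hc
    rwa [tr_inv_tr, ← Module.End.mul_apply, ← map_mul, inv_mul_cancel, map_one] at this
  have hinv' : ∀ g v, (supp (ρ g v)).card = (supp v).card := by
    intro g v
    apply le_antisymm _ (hinv g v)
    have := hinv g⁻¹ (ρ g v)
    rwa [← Module.End.mul_apply, ← map_mul, inv_mul_cancel, map_one] at this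
  -- choose nonzero elements
  have hch : ∀ W ∈ J, ∃ v ∈ W, v ≠ 0 := by
    intro W hW
    obtain ⟨g, rfl⟩ := exJ W hW
    apply Submodule.exists_mem_ne_zero_of_ne_bot
    intro h
    apply hX.1
    rw [← tr_inv_tr (ρ := ρ) g X, h, tr_bot]
  choose! w hwW hw0 using hch
  have hin : ∀ W ∈ J, ∀ W' , W ≠ W' → w W ∈ Yc ρ X W' := by
    intro W hW W' hne
    obtain ⟨g, hg⟩ := exJ W hW
    have h1 : W ≤ Yc ρ X W' := by
      rw [← hg] at hne ⊢
      exact le_iSup₂_of_le (f := fun g (_ : tr ρ g X ≠ W') => tr ρ g X) g hne le_rfl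
    exact h1 (hwW W hW)
  have hsupp : ∀ T ⊆ J, supp (∑ W ∈ T, w W) = T := by
    intro T hT
    ext W
    simp only [supp, Finset.mem_filter]
    constructor
    · rintro ⟨hWJ, hW⟩
      by_contra hc
      apply hW
      refine Submodule.sum_mem _ fun W' hW' => hin W' (hT hW') W ?_
      rintro rfl; exact hc hW'
    · intro hW
      refine ⟨hT hW, fun hc => ?_⟩
      rw [← Finset.add_sum_erase T w hW] at hc
      have h2 : ∑ x ∈ T.erase W, w x ∈ Yc ρ X W := by
        refine Submodule.sum_mem _ fun W' hW' => hin W' (hT (Finset.mem_of_mem_erase hW')) W ?_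
        exact Finset.ne_of_mem_erase hW'
      have h3 : w W ∈ Yc ρ X W := by simpa using Submodule.sub_mem _ hc h2
      obtain ⟨g, hg⟩ := exJ W (hT hW)
      have h4 := hX.disj g
      rw [hg] at h4
      exact hw0 W (hT hW) (Submodule.disjoint_def.1 h4 _ (hwW W (hT hW)) h3)
  rw [hJ]
  have hsub : Finset.Icc 1 J.card ⊆ S.image (fun s => (supp s).card) := by
    intro j hj
    rw [Finset.mem_Icc] at hj
    obtain ⟨T, hTJ, hTc⟩ := Finset.exists_subset_card_eq hj.2
    have h1 := hsupp T hTJ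
    have hne : ∑ W ∈ T, w W ≠ 0 := by
      intro h0
      rw [h0] at h1
      have : supp (0 : M) = ∅ := by
        simp [supp]
      rw [this] at h1
      rw [← h1] at hTc
      simp at hTc; omega
    obtain ⟨s, hs, g, hg⟩ := hS _ hne
    rw [Finset.mem_image]
    refine ⟨s, hs, ?_⟩
    rw [← hinv' g s, hg, h1, hTc]
  have := (Finset.card_le_card hsub).trans Finset.card_image_le
  simpa using this

variable (ρ)
/-- the representation of the stabiliser on a submodule -/
def restr (X : Submodule R M) : Representation R (stab ρ X) X where
  toFun h := (ρ h).restrict (fun v hv => by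
    have := mem_tr (ρ := ρ) (g := (h : G)) hv
    rwa [mem_stab.1 h.2] at this)
  map_one' := by ext v; simp
  map_mul' a b := by ext v; simp

variable {ρ}
lemma restr_apply (X : Submodule R M) (h : stab ρ X) (v : X) :
    ((restr ρ X h v : X) : M) = ρ (h : G) v := rfl

lemma map_tr_restr (X : Submodule R M) (h : stab ρ X) (W : Submodule R X) :
    (tr (restr ρ X) h W).map X.subtype = tr ρ (h : G) (W.map X.subtype) := by
  unfold tr
  rw [← Submodule.map_comp, ← Submodule.map_comp]
  rfl

/-- Minimal blocks have no block for the stabiliser. -/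
lemma no_block_restr {X : Submodule R M} (hX : IsBlock ρ X)
    (hmin : ∀ W, IsBlock ρ W → W ≤ X → W = X) (W : Submodule R X)
    (hW : IsBlock (restr ρ X) W) : W = ⊤ := by
  have hinj : Function.Injective (Submodule.map X.subtype) :=
    Submodule.map_injective_of_injective X.injective_subtype
  have hle : W.map X.subtype ≤ X := Submodule.map_subtype_le X W
  have h1 : IsBlock ρ (W.map X.subtype) := by
    refine hX.refine hle ?_ ?_
    · intro h; apply hW.1; apply hinj; rw [h, Submodule.map_bot]
    · have h2 : (⨆ (g : G) (_ : tr ρ g X = X ∧ tr ρ g (W.map X.subtype) ≠ W.map X.subtype),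
          tr ρ g (W.map X.subtype)) ≤ (Yc (restr ρ X) W W).map X.subtype := by
        refine iSup₂_le fun g hg => ?_
        have := map_tr_restr (ρ := ρ) X ⟨g, hg.1⟩ W
        rw [← this]
        apply Submodule.map_mono
        refine le_iSup₂_of_le (f := fun g (_ : tr (restr ρ X) g W ≠ W) => tr (restr ρ X) g W)
          ⟨g, hg.1⟩ ?_ le_rfl
        intro he
        rw [he] at this
        exact hg.2 this.symm
      refine Disjoint.mono_right h2 ?_
      rw [disjoint_iff, ← Submodule.map_inf _ X.injective_subtype, disjoint_iff.1 hW.2,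
        Submodule.map_bot]
  have h3 := hmin _ h1 hle
  apply hinj
  rw [h3, Submodule.map_top, Submodule.range_subtype]

end Blocks
end EtaDl

end

section
open scoped Classical BigOperators
namespace EtaDl
section FieldPart
variable {H : Type*} [Group H] {V : Type*} [AddCommGroup V]
  {ρ : Representation ℤ H V}

lemma rho_inv_apply {R : Type*} [CommRing R] {G : Type*} [Group G] {M : Type*} [AddCommGroup M]
    [Module R M] (ρ : Representation R G M) (g : G) (v : M) : ρ g⁻¹ (ρ g v) = v := by
  rw [← Module.End.mul_apply, ← map_mul, inv_mul_cancel, map_one]; rfl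

lemma rho_apply_inv {R : Type*} [CommRing R] {G : Type*} [Group G] {M : Type*} [AddCommGroup M]
    [Module R M] (ρ : Representation R G M) (g : G) (v : M) : ρ g (ρ g⁻¹ v) = v := by
  rw [← Module.End.mul_apply, ← map_mul, mul_inv_cancel, map_one]; rfl

lemma field_of_noblock [Nontrivial V] (hqp : ∀ W, IsBlock ρ W → W = ⊤)
    {K : Type*} [CommRing K] [Finite K] [Module K V]
    (hfaith : ∀ k : K, (∀ v : V, k • v = 0) → k = 0) (e : H → K ≃+* K)
    (he : ∀ h k v, ρ h (k • v) = e h k • ρ h v) : IsField K := by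
  obtain ⟨P, hP⟩ := associatedPrimes.nonempty K V
  have hPp : P.IsPrime := hP.isPrime
  have hPm : P.IsMaximal := by
    have : Finite (K ⧸ P) := Finite.of_surjective _ Ideal.Quotient.mk_surjective
    exact Ideal.Quotient.maximal_of_isField P (Finite.isField_of_domain _)
  let T : Ideal K → Submodule ℤ V := fun Q => (Submodule.torsionBySet K V Q).restrictScalars ℤ
  have memT : ∀ Q v, v ∈ T Q ↔ ∀ k ∈ Q, k • v = 0 := by
    intro Q v
    simp only [T, Submodule.restrictScalars_mem, Submodule.mem_torsionBySet_iff]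
    exact ⟨fun h k hk => h ⟨k, hk⟩, fun h k => h k k.2⟩
  have htr : ∀ h, tr ρ h (T P) = T (P.comap (e h).symm) := by
    intro h
    ext w
    constructor
    · rintro ⟨v, hv, rfl⟩
      rw [memT]
      intro k hk
      have h1 := he h ((e h).symm k) v
      rw [RingEquiv.apply_symm_apply] at h1
      rw [← h1, (memT P v).1 hv _ (by simpa using hk), map_zero]
    · intro hw
      rw [memT] at hw
      refine ⟨ρ h⁻¹ w, ?_, rho_apply_inv ρ h w⟩
      rw [SetLike.mem_coe, memT]
      intro k hk
      have h1 := he h k (ρ h⁻¹ w)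
      rw [rho_apply_inv, hw _ (by simpa using hk)] at h1
      rw [← rho_inv_apply ρ h (k • ρ h⁻¹ w), h1, map_zero]
  have hmax : ∀ h, (P.comap (e h).symm).IsMaximal := fun h =>
    Ideal.comap_isMaximal_of_surjective _ (e h).symm.surjective
  have hfin : Finite (Ideal K) := Finite.of_injective (fun I : Ideal K => (I : Set K)) SetLike.coe_injective
  let J : Finset (Ideal K) := (Set.toFinite {Q : Ideal K | Q.IsMaximal}).toFinset
  have memJ : ∀ Q, Q ∈ J ↔ Q.IsMaximal := fun Q => by simp [J]
  have hind := Submodule.supIndep_torsionBySet_ideal (R := K) (M := V) (S := J) (p := id) (by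
    intro Q hQ Q' hQ' hne
    have h1 := (memJ Q).1 hQ
    have h2 := (memJ Q').1 hQ'
    exact h1.coprime_of_ne h2 hne)
  have hd := hind (Finset.erase_subset P J) ((memJ P).2 hPm) (Finset.notMem_erase P J)
  have hblock : IsBlock ρ (T P) := by
    constructor
    · obtain ⟨-, x, hx⟩ := isAssociatedPrime_iff.1 hP
      intro hbot
      have hxT : x ∈ T P := by
        rw [memT]
        intro k hk
        rw [hx] at hk
        simpa [Submodule.mem_colon_singleton] using hk
      rw [hbot, Submodule.mem_bot] at hxT
      apply hPp.ne_top
      rw [hx, hxT, eq_top_iff]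
      intro k _
      simp [Submodule.mem_colon_singleton]
    · have hle : Yc ρ (T P) (T P) ≤
        ((J.erase P).sup fun i => Submodule.torsionBySet K V (id i)).restrictScalars ℤ := by
        refine iSup₂_le fun g hg => ?_
        rw [htr] at hg ⊢
        have h1 : P.comap (e g).symm ∈ J.erase P := by
          rw [Finset.mem_erase]
          exact ⟨fun h => hg (by rw [h]), (memJ _).2 (hmax g)⟩
        have h2 := Finset.le_sup (f := fun i : Ideal K => Submodule.torsionBySet K V (id i)) h1
        intro v hv
        exact h2 hv
      refine Disjoint.mono_right hle ?_
      rw [Submodule.disjoint_def] at hd ⊢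
      intro x hx hx'
      exact hd x hx hx'
  have htop := hqp _ hblock
  have hPbot : P = ⊥ := by
    rw [eq_bot_iff]
    intro k hk
    rw [Ideal.mem_bot]
    apply hfaith
    intro v
    exact (memT P v).1 (htop ▸ Submodule.mem_top) k hk
  subst hPbot
  have : Nontrivial K := ⟨0, 1, fun h => hPp.ne_top ((Ideal.eq_top_iff_one _).2 (h ▸ Ideal.zero_mem _))⟩
  exact Ring.isField_iff_maximal_bot.2 hPm 

end FieldPart
end EtaDl

end

section
open scoped Classical BigOperators
namespace EtaDl
section FieldPart
universe u v
variable {H : Type u} [Group H] {V : Type v} [AddCommGroup V]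
  {ρ : Representation ℤ H V}

lemma exists_field [Nontrivial V] [Finite V] (hqp : ∀ W, IsBlock ρ W → W = ⊤)
    (A : Subgroup H) [A.Normal] (hA : ∀ a ∈ A, ∀ b ∈ A, a * b = b * a) :
    ∃ (K : Type v) (_ : Field K) (_ : Finite K) (_ : Module K V) (ι : A →* K),
      (∀ a v, ι a • v = ρ (a : H) v) ∧
      (∀ h : H, (∀ a ∈ A, h * a = a * h) → ∀ (k : K) v, ρ h (k • v) = k • ρ h v) := by
  let s : Subring (Module.End ℤ V) := Subring.closure (ρ '' A)
  letI : CommRing s := Subring.closureCommRingOfComm (s := ρ '' A) (by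
    rintro _ ⟨a, ha, rfl⟩ _ ⟨b, hb, rfl⟩
    rw [← map_mul, hA a ha b hb, map_mul])
  let E : H → V ≃ₗ[ℤ] V := fun h => LinearEquiv.ofLinear (ρ h) (ρ h⁻¹)
    (LinearMap.ext fun v => rho_apply_inv ρ h v) (LinearMap.ext fun v => rho_inv_apply ρ h v)
  let e0 : H → Module.End ℤ V ≃+* Module.End ℤ V := fun h => (E h).conjRingEquiv
  have he0 : ∀ h f v, e0 h f (ρ h v) = ρ h (f v) := by
    intro h f v
    change (ρ h) (f (ρ h⁻¹ (ρ h v))) = _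
    rw [rho_inv_apply]
  have he1 : ∀ h a, e0 h (ρ a) = ρ (h * a * h⁻¹) := by
    intro h a
    rw [map_mul, map_mul]; rfl
  have hmap : ∀ h, s.map (e0 h : Module.End ℤ V →+* Module.End ℤ V) = s := by
    intro h
    simp only [s]
    rw [RingHom.map_closure]
    congr 1
    ext f
    constructor
    · rintro ⟨_, ⟨a, ha, rfl⟩, rfl⟩
      exact ⟨h * a * h⁻¹, ‹A.Normal›.conj_mem a ha h, (he1 h a).symm⟩
    · rintro ⟨a, ha, rfl⟩
      refine ⟨ρ (h⁻¹ * a * h), ⟨_, by simpa using ‹A.Normal›.conj_mem a ha h⁻¹, rfl⟩, ?_⟩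
      refine (he1 h _).trans ?_
      congr 1; group
  let e : H → s ≃+* s := fun h => ((e0 h).subringMap (s := s)).trans (RingEquiv.subringCongr (hmap h))
  have hfin : Finite (Module.End ℤ V) := Finite.of_injective (fun f : Module.End ℤ V => (f : V → V))
    DFunLike.coe_injective
  have hF : IsField s := field_of_noblock (K := s) hqp
    (fun k hk => Subtype.ext (LinearMap.ext fun v => hk v)) e
    (fun h k v => (he0 h k v).symm)
  letI : Field s := hF.toField
  refine ⟨s, inferInstance, inferInstance, inferInstance,
    { toFun := fun a => ⟨ρ a, Subring.subset_closure ⟨a, a.2, rfl⟩⟩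
      map_one' := Subtype.ext (map_one ρ)
      map_mul' := fun a b => Subtype.ext (map_mul ρ _ _) }, fun a v => rfl, ?_⟩
  intro h hh k v
  have hk : ∀ f ∈ s, ρ h * f = f * ρ h := by
    intro f hf
    refine Subring.closure_induction (p := fun f _ => ρ h * f = f * ρ h) ?_ ?_ ?_ ?_ ?_ ?_ hf
    · rintro _ ⟨a, ha, rfl⟩
      rw [← map_mul, hh a ha, map_mul]
    · simp
    · simp
    · intro x y _ _ hx hy
      rw [mul_add, hx, hy, add_mul]
    · intro x _ hx
      rw [mul_neg, hx, neg_mul]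
    · intro x y _ _ hx hy
      rw [← mul_assoc, hx, mul_assoc, hy, mul_assoc]
  exact LinearMap.congr_fun (hk k k.2) v

end FieldPart
end EtaDl

end

section
open scoped Classical BigOperators
open scoped commutatorElement
namespace EtaDl
section QPart
universe u v
variable {H : Type u} [Group H]

lemma comm_eq_one_iff {G : Type*} [Group G] (a b : G) : ⁅a, b⁆ = 1 ↔ a * b = b * a := by
  rw [commutatorElement_eq_one_iff_mul_comm]

lemma comm_le_iff {G : Type*} [Group G] (A X Z : Subgroup G) [A.Normal] : ⁅X, Z⁆ ≤ A ↔
    X ≤ (Subgroup.centralizer ((Z.map (QuotientGroup.mk' A) : Subgroup (G ⧸ A)) :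
      Set (G ⧸ A))).comap (QuotientGroup.mk' A) := by
  rw [← Subgroup.map_le_iff_le_comap, ← Subgroup.commutator_eq_bot_iff_le_centralizer,
    ← Subgroup.map_commutator, Subgroup.map_eq_bot_iff, QuotientGroup.ker_mk']

lemma comm_sup_le {G : Type*} [Group G] {A X Y Z : Subgroup G} [A.Normal] (h1 : ⁅X, Z⁆ ≤ A)
    (h2 : ⁅Y, Z⁆ ≤ A) : ⁅X ⊔ Y, Z⁆ ≤ A := by
  rw [comm_le_iff] at *
  exact sup_le h1 h2

lemma exists_fit [Finite H] [Group.IsSolvable H] : ∃ A F : Subgroup H, A.Normal ∧ F.Normal ∧ A ≤ F ∧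
    (∀ a ∈ A, ∀ f ∈ F, f * a = a * f) ∧ ⁅F, F⁆ ≤ A ∧
    (∀ x, (∀ f ∈ F, x * f = f * x) → x ∈ A) := by
  obtain ⟨A, hA⟩ := (Set.toFinite {A : Subgroup H | A.Normal ∧ ∀ a ∈ A, ∀ b ∈ A, a * b = b * a}).exists_maximal
    ⟨⊥, inferInstance, by simp⟩
  have hAn := hA.1.1
  obtain ⟨F, hF⟩ := (Set.toFinite {F : Subgroup H | F.Normal ∧ A ≤ F ∧
    (∀ a ∈ A, ∀ f ∈ F, f * a = a * f) ∧ ⁅F, F⁆ ≤ A}).exists_maximal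
    ⟨A, hAn, le_rfl, fun a ha f hf => hA.1.2 f hf a ha, comm_self_le A⟩
  have hFn := hF.1.1
  obtain ⟨-, hAF, hcomm, hFF⟩ := hF.1
  refine ⟨A, F, hAn, hFn, hAF, hcomm, hFF, ?_⟩
  let Z := Subgroup.centralizer (F : Set H)
  have memZ : ∀ x, x ∈ Z ↔ ∀ f ∈ F, f * x = x * f := fun x => Subgroup.mem_centralizer_iff
  by_cases hZA : Z ≤ A
  · intro x hx
    exact hZA ((memZ x).2 fun f hf => (hx f hf).symm)
  exfalso
  have hZn : Z.Normal := inferInstance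
  obtain ⟨L, hLn, hAL, hLZ, hLL, -⟩ := exists_chief A Z hZA
  have hAZ : A ≤ Z := fun a ha => (memZ a).2 (hcomm a ha)
  rw [sup_eq_left.2 hAZ] at hLZ
  have hFL : ⁅F, L⁆ ≤ A := by
    rw [Subgroup.commutator_le]
    intro f hf l hl
    rw [(comm_eq_one_iff f l).2 ((memZ l).1 (hLZ hl) f hf)]
    exact A.one_mem
  have hsup : F ⊔ L ∈ {F : Subgroup H | F.Normal ∧ A ≤ F ∧
    (∀ a ∈ A, ∀ f ∈ F, f * a = a * f) ∧ ⁅F, F⁆ ≤ A} := by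
    refine ⟨inferInstance, hAF.trans le_sup_left, ?_, ?_⟩
    · intro a ha x hx
      have h1 : F ⊔ L ≤ Subgroup.centralizer {a} := by
        refine sup_le ?_ ?_
        · intro f hf; rw [Subgroup.mem_centralizer_singleton_iff]; exact (hcomm a ha f hf)
        · intro l hl; rw [Subgroup.mem_centralizer_singleton_iff]
          exact ((memZ l).1 (hLZ hl) a (hAF ha)).symm
      exact Subgroup.mem_centralizer_singleton_iff.1 (h1 hx)
    · have hLF' : ⁅L, F⁆ ≤ A := by rw [Subgroup.commutator_comm]; exact hFL
      have h1 : ⁅F, F ⊔ L⁆ ≤ A := by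
        rw [Subgroup.commutator_comm]; exact comm_sup_le hFF hLF'
      have h2 : ⁅L, F ⊔ L⁆ ≤ A := by
        rw [Subgroup.commutator_comm]; exact comm_sup_le hFL hLL
      exact comm_sup_le h1 h2
  have hLF : L ≤ F := le_sup_right.trans (hF.2 hsup le_sup_left)
  have hLA : L ≤ A := hA.2 ⟨hLn, fun a ha b hb => (memZ b).1 (hLZ hb) a (hLF ha)⟩ hAL.le
  exact absurd hLA (not_le_of_gt hAL)

variable {V : Type v} [AddCommGroup V] {ρ : Representation ℤ H V}

lemma fit_finrank [Finite V] [Nontrivial V] [Finite H] (A F : Subgroup H) [hAn : A.Normal] [F.Normal]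
    (hcomm : ∀ a ∈ A, ∀ f ∈ F, f * a = a * f) (hFF : ⁅F, F⁆ ≤ A)
    (hZ : ∀ x, (∀ f ∈ F, x * f = f * x) → x ∈ A)
    (K : Type v) [Field K] [Finite K] [Module K V] (ι : A →* K) (hinj : Function.Injective ι)
    (hι : ∀ a v, ι a • v = ρ (a : H) v)
    (hlin : ∀ f ∈ F, ∀ (k : K) v, ρ f (k • v) = k • ρ f v) :
    Nat.card (F ⧸ A.subgroupOf F) ≤ Module.finrank K V * Module.finrank K V := by
  haveI : Module.Finite K V := Module.Finite.of_finite
  let Q := F ⧸ A.subgroupOf F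
  haveI : Fintype Q := Fintype.ofFinite Q
  let f : Q → F := Quotient.out
  have hf : ∀ q : Q, (QuotientGroup.mk (f q) : Q) = q := fun q => Quotient.out_eq q
  let T : Q → (V →ₗ[K] V) := fun q =>
    { toFun := fun v => ρ (f q : H) v
      map_add' := fun a b => map_add _ _ _
      map_smul' := fun k v => hlin _ (f q).2 k v }
  have hmem : ∀ x y : F, ⁅(x : H), (y : H)⁆ ∈ A := fun x y =>
    hFF (Subgroup.commutator_mem_commutator x.2 y.2)
  have hmul : ∀ x y z : F, ⁅(x * y : H), (z : H)⁆ = ⁅(x : H), (z : H)⁆ * ⁅(y : H), (z : H)⁆ := by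
    intro x y z
    have h1 := hcomm _ (hmem y z) x x.2
    have h2 : ⁅(x * y : H), (z : H)⁆ = ((x : H) * ⁅(y : H), (z : H)⁆) * (x : H)⁻¹ * ⁅(x : H), (z : H)⁆ := by
      simp only [commutatorElement_def]; group
    rw [h2, h1, mul_assoc, mul_assoc, mul_inv_cancel_left]
    exact (hcomm _ (hmem y z) _ (by
      exact F.mul_mem (F.mul_mem (F.mul_mem x.2 z.2) (F.inv_mem x.2)) (F.inv_mem z.2))).symm
  let ψ : Q → (F →* K) := fun q => ι.comp
    { toFun := fun x => ⟨⁅(x : H), (f q : H)⁆, hmem x (f q)⟩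
      map_one' := by ext; simp
      map_mul' := fun x y => by ext; exact hmul x y (f q) }
  have hψ : ∀ q (x : F) v, ρ (x : H) (ρ (f q : H) (ρ (x : H)⁻¹ v)) = ψ q x • ρ (f q : H) v := by
    intro q x v
    have h1 : ψ q x • ρ (f q : H) v = ρ ⁅(x : H), (f q : H)⁆ (ρ (f q : H) v) := hι _ _
    rw [h1, ← Module.End.mul_apply, ← Module.End.mul_apply, ← Module.End.mul_apply, ← map_mul,
      ← map_mul, ← map_mul, commutatorElement_def]
    congr 2; group
  have hψinj : Function.Injective ψ := by
    intro p q hpq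
    rw [← hf p, ← hf q, QuotientGroup.eq, Subgroup.mem_subgroupOf]
    apply hZ
    intro x hx
    have h1 := hinj (DFunLike.congr_fun hpq ⟨x, hx⟩)
    have h2 : ⁅x, (f p : H)⁆ = ⁅x, (f q : H)⁆ := congrArg Subtype.val h1
    rw [commutatorElement_def, commutatorElement_def] at h2
    have h3 : (f p : H) * x⁻¹ * (f p : H)⁻¹ = f q * x⁻¹ * (f q : H)⁻¹ := by
      apply mul_left_cancel (a := x); simpa [mul_assoc] using h2
    have h4 : (f p : H) * x * (f p : H)⁻¹ = f q * x * (f q : H)⁻¹ := by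
      have := congrArg (·⁻¹) h3; simpa [mul_assoc] using this
    have h5 := congrArg (fun z => (f p : H)⁻¹ * z * f q) h4
    simp [mul_assoc] at h5
    simp [mul_assoc, h5]
  have hLI : LinearIndependent K T := by
    rw [linearIndependent_iff']
    intro s g hg q hq
    have key : ∀ v (φ : Module.Dual K V), ∀ q ∈ s, g q * φ (T q v) = 0 := by
      intro v φ
      have hd := (linearIndependent_monoidHom F K).comp ψ hψinj
      rw [linearIndependent_iff'] at hd
      apply hd s
      ext x
      have h1 := LinearMap.congr_fun hg (ρ (x : H)⁻¹ v)
      have h2 := congrArg (fun w => φ (ρ (x : H) w)) h1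
      simp only [LinearMap.sum_apply, LinearMap.smul_apply, map_sum, LinearMap.zero_apply,
        map_zero] at h2
      simp only [Finset.sum_apply, Pi.smul_apply, Function.comp, smul_eq_mul, Pi.zero_apply]
      rw [← h2]
      refine Finset.sum_congr rfl fun q _ => ?_
      rw [hlin _ x.2]
      change g q * φ (ρ (f q : H) v) * _ = φ (g q • ρ (x : H) (ρ (f q : H) (ρ (x : H)⁻¹ v)))
      rw [hψ, map_smul, map_smul, smul_eq_mul, smul_eq_mul]; ring
    obtain ⟨v, hv⟩ := exists_ne (0 : V)
    by_contra hgq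
    apply hv
    have h3 : T q v = 0 := by
      rw [← Module.forall_dual_apply_eq_zero_iff K]
      intro φ
      exact (mul_eq_zero.1 (key v φ q hq)).resolve_left hgq
    have h4 := rho_inv_apply ρ (f q : H) v
    rw [← h4]
    change ρ _ (T q v) = 0
    rw [h3, map_zero]
  have := hLI.fintype_card_le_finrank
  rw [Module.finrank_linearMap] at this
  rwa [Nat.card_eq_fintype_card]

end QPart
end EtaDl

end

section
open scoped Classical BigOperators
open scoped commutatorElement
namespace EtaDl
section QPart
universe u v
variable {H : Type u} [Group H]

lemma num2 (n : ℕ) (h : 2 ^ n ≤ 4 * (n + 2) ^ 4) : n < 20 := by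
  by_contra hn
  push Not at hn
  have key : ∀ m : ℕ, 20 ≤ m → 4 * (m + 2) ^ 4 < 2 ^ m := by
    intro m hm
    induction m, hm using Nat.le_induction with
    | base => norm_num
    | succ m hm ih =>
      have h1 : (m + 1 + 2) ^ 4 ≤ 2 * (m + 2) ^ 4 := by
        obtain ⟨k, rfl⟩ := Nat.exists_eq_add_of_le hm
        ring_nf
        nlinarith [sq_nonneg (k^2), Nat.zero_le (k^3), Nat.zero_le (k^2), Nat.zero_le k]
      rw [pow_succ 2]; omega
  exact absurd h (not_le_of_gt (key n hn))

lemma comm_le_centralizer_of_cyclic {G : Type*} [Group G] (A : Subgroup G) [A.Normal]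
    (h : IsCyclic A) : ∀ x ∈ ⁅(⊤ : Subgroup G), (⊤ : Subgroup G)⁆, ∀ a ∈ A, x * a = a * x := by
  have h1 : ⁅(⊤ : Subgroup G), (⊤ : Subgroup G)⁆ ≤ (MulAut.conjNormal (H := A)).ker := by
    rw [Subgroup.commutator_le]
    intro x _ y _
    rw [MonoidHom.mem_ker, map_commutatorElement, comm_eq_one_iff]
    apply (IsCyclic.mulAutMulEquiv A).injective
    rw [map_mul, map_mul, mul_comm]
  intro x hx a ha
  have h2 := DFunLike.congr_fun (MonoidHom.mem_ker.1 (h1 hx)) ⟨a, ha⟩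
  have h3 := congrArg Subtype.val h2
  rw [MulAut.conjNormal_apply] at h3
  simp only [MulAut.one_apply] at h3
  exact mul_inv_eq_iff_eq_mul.1 h3

/-- dl bound for groups with such A, F -/
lemma fit_dl [Finite H] [Group.IsSolvable H] (A F : Subgroup H) [hAn : A.Normal] [hFn : F.Normal]
    (hAF : A ≤ F)
    (hcomm : ∀ a ∈ A, ∀ f ∈ F, f * a = a * f)
    (hZ : ∀ x, (∀ f ∈ F, x * f = f * x) → x ∈ A) (hcyc : IsCyclic A) (m : ℕ)
    (hcard : Nat.card F ≤ 2 ^ m * Nat.card A) : dsr (⊤ : Subgroup H) (m * m + 3) = ⊥ := by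
  let C := Subgroup.centralizer (A : Set H)
  have hC : dsr (⊤ : Subgroup H) 1 ≤ C := by
    intro x hx
    rw [Subgroup.mem_centralizer_iff]
    intro a ha
    exact (comm_le_centralizer_of_cyclic A hcyc x hx a ha).symm
  let D := dsr (dsr (⊤ : Subgroup H) 1) (m * m)
  have hD1 : ⁅D, F⁆ ≤ A := dsr_centralize_section _ F A m hAF
    (fun a _ b hb => hAn.conj_mem _ hb _) (fun a _ b hb => hFn.conj_mem _ hb _)
    (fun a _ b hb => hAn.conj_mem _ hb _) hcard
  have hDC : D ≤ C := (dsr_le _ _).trans hC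
  have hAD : ⁅A, D⁆ = ⊥ := by
    rw [Subgroup.commutator_comm, Subgroup.commutator_eq_bot_iff_le_centralizer]; exact hDC
  have h2 : ⁅⁅D, D⁆, F⁆ = ⊥ := by
    apply Subgroup.commutator_commutator_eq_bot_of_rotate
    · rw [eq_bot_iff, ← hAD]; exact Subgroup.commutator_mono hD1 le_rfl
    · rw [eq_bot_iff, ← hAD]
      refine Subgroup.commutator_mono ?_ le_rfl
      rw [Subgroup.commutator_comm]; exact hD1
  have h3 : ⁅D, D⁆ ≤ A := by
    intro x hx
    apply hZ
    intro f hf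
    rw [Subgroup.commutator_eq_bot_iff_le_centralizer] at h2
    exact (Subgroup.mem_centralizer_iff.1 (h2 hx) f hf).symm
  have h4 : dsr (⊤ : Subgroup H) (m * m + 3) = ⁅⁅D, D⁆, ⁅D, D⁆⁆ := by
    have : dsr (⊤ : Subgroup H) (m * m + 3) = dsr D 2 := by
      simp only [D]; rw [dsr_add, dsr_add]; congr 1; ring
    rw [this]; rfl
  rw [h4, eq_bot_iff]
  refine (Subgroup.commutator_mono h3 h3).trans ?_
  rw [Subgroup.commutator_le]
  intro a ha b hb
  rw [Subgroup.mem_bot, comm_eq_one_iff]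
  exact hcomm b hb a (hAF ha)

variable {V : Type v} [AddCommGroup V] {ρ : Representation ℤ H V}

lemma qp_faithful [Finite H] [Group.IsSolvable H] [Finite V] [Nontrivial V]
    (hinj : Function.Injective ρ) (hqp : ∀ W, IsBlock ρ W → W = ⊤) (S : Finset V)
    (hS : ∀ v : V, v ≠ 0 → ∃ s ∈ S, ∃ g, ρ g s = v) :
    dsr (⊤ : Subgroup H) (S.card + 441) = ⊥ := by
  obtain ⟨A, F, hAn, hFn, hAF, hcomm, hFF, hZ⟩ := exists_fit (H := H)
  obtain ⟨K, _, _, _, ι, hι, hlin⟩ := exists_field hqp A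
    (fun a ha b hb => hcomm b hb a (hAF ha))
  have hιinj : Function.Injective ι := by
    intro a b hab
    apply Subtype.ext
    apply hinj
    ext v
    rw [← hι, ← hι, hab]
  have hcyc : IsCyclic A := isCyclic_of_injective_ringHom ι hιinj
  have hAq : Nat.card A ≤ Nat.card K := Nat.card_le_card_of_injective ι hιinj
  have hN := fit_finrank A F hcomm hFF hZ K ι hιinj hι
    (fun f hf => hlin f fun a ha => hcomm a ha f hf)
  haveI : Module.Finite K V := Module.Finite.of_finite
  have hV : Nat.card V = Nat.card K ^ Module.finrank K V := by
    have := Module.natCard_eq_pow_finrank (K := K) (V := V)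
    exact this
  have hFc : Nat.card F = Nat.card (F ⧸ A.subgroupOf F) * Nat.card A := by
    rw [← Nat.card_congr (Subgroup.subgroupOfEquivOfLe hAF).toEquiv]
    exact Subgroup.card_eq_card_quotient_mul_card_subgroup _
  have hq2 : 2 ≤ Nat.card K := Finite.one_lt_card
  have hNpos : 0 < Nat.card (F ⧸ A.subgroupOf F) := Nat.card_pos
  generalize Nat.card (F ⧸ A.subgroupOf F) = N at *
  generalize Module.finrank K V = d at *
  generalize Nat.card K = q at *
  obtain ⟨n, hn⟩ : ∃ n, Nat.log 2 N = n := ⟨_, rfl⟩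
  have hN1 : 2 ^ n ≤ N := by rw [← hn]; exact Nat.pow_log_le_self 2 (by omega)
  have hN2 : N ≤ 2 ^ (n + 1) := by rw [← hn]; exact (Nat.lt_pow_succ_log_self (by norm_num) N).le
  have hFcard : Nat.card F ≤ 2 ^ (n + 1) * Nat.card A := by
    rw [hFc]; exact Nat.mul_le_mul_right _ hN2
  have hdl := fit_dl A F hAF hcomm hZ hcyc (n + 1) hFcard
  -- card of H
  have hFq : Nat.card F ≤ q ^ (n + 2) := by
    refine hFcard.trans ?_
    rw [pow_succ q (n + 1)]
    exact Nat.mul_le_mul (Nat.pow_le_pow_left hq2 _) hAq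
  have hHc : Nat.card H ≤ q ^ ((n + 2) * (n + 2)) * q := by
    obtain ⟨t, htF, ht⟩ := exists_gen (n + 1) A F hAF hFcard
    obtain ⟨a, ha⟩ := hcyc.exists_generator
    have h1 := card_le_of_gen (⊤ : Subgroup H) F A (n + 2) (Fin.cons (a : H) t) (by
      intro i
      refine Fin.cases ?_ ?_ i
      · simpa using hAF a.2
      · intro j; simpa using htF j) (fun p _ f hf => hFn.conj_mem f hf p) (by
      intro p _ hp
      apply hZ
      have hle : F ≤ Subgroup.centralizer {p} := by
        refine ht.trans (sup_le ?_ ?_)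
        · intro b hb
          obtain ⟨z, hz⟩ := Subgroup.mem_zpowers_iff.1 (ha ⟨b, hb⟩)
          have hz' : (a : H) ^ z = b := congrArg Subtype.val hz
          rw [← hz']
          apply Subgroup.zpow_mem
          rw [Subgroup.mem_centralizer_singleton_iff]
          have := hp 0
          simp only [Fin.cons_zero] at this
          exact (mul_inv_eq_iff_eq_mul.1 this).symm
        · rw [Subgroup.closure_le]
          rintro _ ⟨i, rfl⟩
          rw [SetLike.mem_coe, Subgroup.mem_centralizer_singleton_iff]
          have := hp i.succ
          simp only [Fin.cons_succ] at this
          exact (mul_inv_eq_iff_eq_mul.1 this).symm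
      intro f hf
      exact (Subgroup.mem_centralizer_singleton_iff.1 (hle hf)).symm)
    have h2 : Nat.card H = Nat.card (⊤ : Subgroup H) := by simp
    rw [h2]
    refine h1.trans ?_
    rw [pow_mul]
    exact Nat.mul_le_mul (Nat.pow_le_pow_left hFq _) hAq
  -- orbits
  have hVc : Nat.card V ≤ 1 + S.card * Nat.card H := by
    haveI := Fintype.ofFinite V
    haveI := Fintype.ofFinite H
    have : (Finset.univ : Finset V) ⊆ {0} ∪ (S ×ˢ (Finset.univ : Finset H)).image
        (fun p => ρ p.2 p.1) := by
      intro v _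
      by_cases hv : v = 0
      · simp [hv]
      · obtain ⟨s, hs, g, hg⟩ := hS v hv
        rw [Finset.mem_union]
        right
        rw [Finset.mem_image]
        exact ⟨(s, g), by simp [hs], hg⟩
    have := (Finset.card_le_card this).trans (Finset.card_union_le _ _)
    rw [Finset.card_univ, Finset.card_singleton] at this
    rw [Nat.card_eq_fintype_card, Nat.card_eq_fintype_card]
    refine this.trans (Nat.add_le_add_left ?_ _)
    refine Finset.card_image_le.trans ?_
    rw [Finset.card_product, Finset.card_univ]
  have hmain : q ^ d ≤ (1 + S.card) * q ^ ((n + 2) * (n + 2) + 1) := by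
    rw [← hV]
    refine hVc.trans ?_
    have h1 : 1 ≤ q ^ ((n + 2) * (n + 2) + 1) := Nat.one_le_pow _ _ (by omega)
    rw [add_mul, one_mul]
    refine Nat.add_le_add h1 (Nat.mul_le_mul_left _ ?_)
    rw [pow_succ]; exact hHc
  rw [eq_bot_iff, ← hdl]
  apply dsr_anti
  by_cases hd : 2 * ((n + 2) * (n + 2)) + 1 ≤ d
  · have h1 : q ^ ((n + 2) * (n + 2)) * q ^ ((n + 2) * (n + 2) + 1) ≤
      (1 + S.card) * q ^ ((n + 2) * (n + 2) + 1) := by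
      rw [← pow_add]
      refine le_trans (Nat.pow_le_pow_right (by omega) (by omega)) hmain
    have h2 := Nat.le_of_mul_le_mul_right h1 (Nat.pow_pos (by omega))
    have h3 : (n + 2) * (n + 2) < q ^ ((n + 2) * (n + 2)) :=
      (Nat.lt_two_pow_self).trans_le (Nat.pow_le_pow_left hq2 _)
    nlinarith
  · push Not at hd
    have h1 : d ≤ 2 * ((n + 2) * (n + 2)) := by omega
    have h2 : 2 ^ n ≤ 4 * (n + 2) ^ 4 := by
      refine (hN1.trans hN).trans ((Nat.mul_le_mul h1 h1).trans ?_)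
      apply le_of_eq; ring
    have h3 := num2 n h2
    nlinarith

lemma qp_bound [Finite H] [Group.IsSolvable H] [Finite V] [Nontrivial V]
    (hqp : ∀ W, IsBlock ρ W → W = ⊤) (S : Finset V)
    (hS : ∀ v : V, v ≠ 0 → ∃ s ∈ S, ∃ g, ρ g s = v) :
    ∀ x ∈ dsr (⊤ : Subgroup H) (S.card + 441), ρ x = 1 := by
  let f : H →* (Module.End ℤ V)ˣ := MonoidHom.toHomUnits ρ
  have hf : ∀ h, ((f h : (Module.End ℤ V)ˣ) : Module.End ℤ V) = ρ h := fun h => rfl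
  let H' := f.range
  haveI : Finite H' := Finite.of_surjective _ f.rangeRestrict_surjective
  haveI : Group.IsSolvable H' := Group.isSolvable_of_surjective f.rangeRestrict_surjective
  let ρ' : Representation ℤ H' V := (Units.coeHom (Module.End ℤ V)).comp H'.subtype
  have hρ' : ∀ h, ρ' (f.rangeRestrict h) = ρ h := fun h => rfl
  have htr : ∀ h W, tr ρ' (f.rangeRestrict h) W = tr ρ h W := fun h W => rfl
  have h1 := qp_faithful (ρ := ρ') (by
    intro a b hab
    apply Subtype.ext
    exact Units.ext hab) (by
    intro W hW
    apply hqp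
    refine ⟨hW.1, hW.2.mono_right ?_⟩
    refine iSup₂_le fun g hg => ?_
    exact le_iSup₂_of_le (f := fun g (_ : tr ρ' g W ≠ W) => tr ρ' g W) (f.rangeRestrict g) hg le_rfl)
    S (by
    intro v hv
    obtain ⟨s, hs, g, hg⟩ := hS v hv
    exact ⟨s, hs, f.rangeRestrict g, hg⟩)
  intro x hx
  have h2 : f.rangeRestrict x ∈ dsr (⊤ : Subgroup H') (S.card + 441) := by
    have h3 : (⊤ : Subgroup H').map f.range.subtype = f.range := by
      rw [← MonoidHom.range_eq_map, Subgroup.range_subtype]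
    have h4 : (⊤ : Subgroup H') = (⊤ : Subgroup H).map f.rangeRestrict :=
      (Subgroup.map_top_of_surjective _ f.rangeRestrict_surjective).symm
    rw [h4, ← map_dsr]
    exact Subgroup.mem_map_of_mem _ hx
  rw [h1, Subgroup.mem_bot] at h2
  rw [← hρ', h2, map_one]

/-- The orbit theorem. -/
theorem orbit_bound {G : Type u} [Group G] [Finite G] [Group.IsSolvable G] [Finite V]
    {ρ : Representation ℤ G V} (hirr : Irr ρ) (S : Finset V)
    (hS : ∀ v : V, v ≠ 0 → ∃ s ∈ S, ∃ g, ρ g s = v) :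
    ∀ x ∈ dsr (⊤ : Subgroup G) (10 * S.card + 441), ρ x = 1 := by
  obtain ⟨c, hc⟩ : ∃ c, c = 441 := ⟨_, rfl⟩
  rw [← hc]
  haveI := hirr.1
  obtain ⟨X, hX, hmin⟩ := exists_min_block ρ
  have hk := index_le_orbits hX S hS
  haveI : Nontrivial X := Submodule.nontrivial_iff_ne_bot.2 hX.1
  -- orbit representatives in X
  let P : V → Prop := fun s => ∃ w : X, w ≠ 0 ∧ ∃ g, ρ g s = w
  let r : V → X := fun s => if h : P s then h.choose else 0
  let S1 : Finset X := S.image r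
  have hS1c : S1.card ≤ S.card := Finset.card_image_le
  have hS1 : ∀ v : X, v ≠ 0 → ∃ s ∈ S1, ∃ g, restr ρ X g s = v := by
    intro v hv
    have hv' : (v : V) ≠ 0 := fun h => hv (Subtype.ext h)
    obtain ⟨s, hs, g, hg⟩ := hS v hv'
    have hP : P s := ⟨v, hv, g, hg⟩
    have hr : r s = hP.choose := dif_pos hP
    obtain ⟨hw0, g', hg'⟩ := hP.choose_spec
    rw [← hr] at hw0 hg'
    have e1 : ρ (g * g'⁻¹) (r s : V) = v := by
      rw [map_mul, Module.End.mul_apply, ← hg', rho_inv_apply, hg]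
    have hst := hX.mem_stab (r s).2 (fun h => hw0 (Subtype.ext h)) (by rw [e1]; exact v.2)
    refine ⟨r s, Finset.mem_image_of_mem r hs, ⟨_, hst⟩, Subtype.ext ?_⟩
    rw [restr_apply]; exact e1
  have h1 := qp_bound (no_block_restr hX hmin) S1 hS1
  rw [← hc] at h1
  -- core
  let C := (stab ρ X).normalCore
  have h2 : ∀ x ∈ dsr C (S.card + c), ∀ v ∈ X, ρ x v = v := by
    intro x hx v hv
    have h3 : x ∈ dsr (stab ρ X) (S1.card + c) :=
      dsr_anti _ (by omega) (dsr_mono (Subgroup.normalCore_le _) _ hx)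
    have h4 : dsr (stab ρ X) (S1.card + c) =
        (dsr (⊤ : Subgroup (stab ρ X)) (S1.card + c)).map (stab ρ X).subtype := by
      rw [map_dsr, ← MonoidHom.range_eq_map, Subgroup.range_subtype]
    rw [h4] at h3
    obtain ⟨y, hy, rfl⟩ := h3
    have h5 := h1 y hy
    have h6 := congrArg Subtype.val (LinearMap.congr_fun h5 ⟨v, hv⟩)
    exact h6
  haveI := dsr_normal C (S.card + c)
  intro x hx
  have h3 : x ∈ dsr C (S.card + c) := by
    have h4 := perm_bound (stab ρ X)
    refine (dsr_mono h4 _) ?_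
    rw [dsr_add]
    exact dsr_anti _ (by omega) hx
  have h5 : LinearMap.eqLocus (ρ x) (1 : Module.End ℤ V) = ⊤ := by
    rw [eq_top_iff, ← hirr.iSup_tr hX.1]
    refine iSup_le fun g => ?_
    rintro _ ⟨v, hv, rfl⟩
    rw [LinearMap.mem_eqLocus]
    have h6 : g⁻¹ * x * g ∈ dsr C (S.card + c) := by
      simpa using (dsr_normal C (S.card + c)).conj_mem x h3 g⁻¹
    have h7 := h2 _ h6 v hv
    have h8 := congrArg (ρ g) h7
    rw [← Module.End.mul_apply, ← map_mul] at h8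
    have e : g * (g⁻¹ * x * g) = x * g := by group
    rw [e, map_mul, Module.End.mul_apply] at h8
    exact h8
  ext v
  have : v ∈ LinearMap.eqLocus (ρ x) (1 : Module.End ℤ V) := h5 ▸ Submodule.mem_top
  exact this

end QPart
end EtaDl

end

section
open scoped Classical BigOperators
namespace EtaDl
section Chars
variable {G : Type} [Group G] [Fintype G]

noncomputable instance cardInv : Invertible (Nat.card G : ℂ) :=
  invertibleOfNonzero (by exact_mod_cast Nat.card_pos.ne')

lemma irr_isIrreducible {X : Type*} [AddCommGroup X] [Module ℂ X] {ρ : Representation ℂ G X}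
    (h : Irr ρ) : ρ.IsIrreducible := by
  obtain ⟨hn, h⟩ := h
  refine { toNontrivial := ⟨⊥, ⊤, fun hh => ?_⟩, eq_bot_or_eq_top := fun a => ?_ }
  · have := congrArg Subrepresentation.toSubmodule hh
    exact bot_ne_top this
  · rcases h a.toSubmodule (fun g => by
      rintro _ ⟨v, hv, rfl⟩; exact a.apply_mem_toSubmodule g hv) with h | h
    · left; exact Subrepresentation.toSubmodule_injective h
    · right; exact Subrepresentation.toSubmodule_injective h

/-- Maschke -/
lemma exists_compl {X : Type*} [AddCommGroup X] [Module ℂ X] (ρ : Representation ℂ G X)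
    (W : Submodule ℂ X) (hW : ∀ g, tr ρ g W ≤ W) :
    ∃ W' : Submodule ℂ X, (∀ g, tr ρ g W' ≤ W') ∧ IsCompl W W' := by
  haveI : NeZero (Nat.card G : ℂ) := ⟨by exact_mod_cast Nat.card_pos.ne'⟩
  have : ρ.IsSemisimpleRepresentation := inferInstance
  obtain ⟨b, hb⟩ := this.exists_isCompl ⟨W, fun g v hv => hW g (mem_tr hv)⟩
  refine ⟨b.toSubmodule, fun g => by
      rintro _ ⟨v, hv, rfl⟩; exact b.apply_mem_toSubmodule g hv, ?_⟩
  constructor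
  · rw [disjoint_iff]
    have := congrArg Subrepresentation.toSubmodule (disjoint_iff.1 hb.1)
    exact this
  · rw [codisjoint_iff]
    have := congrArg Subrepresentation.toSubmodule (codisjoint_iff.1 hb.2)
    exact this

lemma simple_of_irr {X : Type} [AddCommGroup X] [Module ℂ X] [FiniteDimensional ℂ X]
    {ρ : Representation ℂ G X} (h : Irr ρ) : CategoryTheory.Simple (FDRep.of ρ) := by
  haveI := irr_isIrreducible h
  rw [FDRep.simple_iff_char_is_norm_one]
  have := Representation.char_orthonormal ρ ρ
  rw [if_pos ⟨Representation.Equiv.refl _⟩] at this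
  have h0 : (Nat.card G : ℂ) ≠ 0 := by exact_mod_cast Nat.card_pos.ne'
  rw [inv_mul_eq_iff_eq_mul₀ h0] at this
  exact this.trans (mul_one _)

lemma irr_of_simple (V : FDRep ℂ G) (h : CategoryTheory.Simple V) :
    Irr (V.ρ : Representation ℂ G V) := by
  rw [FDRep.simple_iff_char_is_norm_one] at h
  have h0 : (Nat.card G : ℂ) ≠ 0 := by exact_mod_cast Nat.card_pos.ne'
  have h1 := Representation.card_inv_mul_sum_char_mul_char_eq_finrank
    (V.ρ : Representation ℂ G V) (V.ρ : Representation ℂ G V)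
  have h2 : ∑ g : G, Representation.character (V.ρ : Representation ℂ G V) g *
    Representation.character (V.ρ : Representation ℂ G V) g⁻¹ = Nat.card G := h
  rw [h2, inv_mul_cancel₀ h0] at h1
  have h3 : Module.finrank ℂ (Representation.IntertwiningMap (V.ρ : Representation ℂ G V)
    (V.ρ : Representation ℂ G V)) = 1 := by exact_mod_cast h1.symm
  have hnt : Nontrivial V := by
    by_contra hn
    rw [not_nontrivial_iff_subsingleton] at hn
    have : ∀ g, V.character g = 0 := fun g => by
      unfold FDRep.character
      rw [Subsingleton.elim (V.ρ g) 0, map_zero]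
    simp only [this, zero_mul, Finset.sum_const_zero] at h
    exact h0 h.symm
  refine ⟨hnt, fun W hW => ?_⟩
  obtain ⟨W', hW', hc⟩ := exists_compl (V.ρ : Representation ℂ G V) W hW
  let p : V →ₗ[ℂ] V := W.subtype ∘ₗ (Submodule.projectionOnto W W' hc)
  have hp1 : ∀ w ∈ W, p w = w := fun w hw => by
    have := Submodule.projectionOnto_apply_left hc ⟨w, hw⟩
    simp only [p, LinearMap.comp_apply, Submodule.subtype_apply]
    exact congrArg Subtype.val this
  have hp2 : ∀ w ∈ W', p w = 0 := fun w hw => by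
    have := Submodule.projectionOnto_apply_right hc ⟨w, hw⟩
    simp only [p, LinearMap.comp_apply, Submodule.subtype_apply]
    exact congrArg Subtype.val this
  have hp : ∀ g v, p (V.ρ g v) = V.ρ g (p v) := fun g v => by
    have : v ∈ W ⊔ W' := hc.sup_eq_top ▸ Submodule.mem_top
    obtain ⟨a, ha, b, hb, rfl⟩ := Submodule.mem_sup.1 this
    rw [map_add, map_add, map_add, map_add, hp1 a ha, hp2 b hb, map_zero,
      hp1 _ (hW g (mem_tr ha)), hp2 _ (hW' g (mem_tr hb))]
  let P := LinearMap.intertwiningMap_of_isIntertwiningMap (ρ := (V.ρ : Representation ℂ G V))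
    (σ := (V.ρ : Representation ℂ G V)) p hp
  let I := LinearMap.intertwiningMap_of_isIntertwiningMap (ρ := (V.ρ : Representation ℂ G V))
    (σ := (V.ρ : Representation ℂ G V)) LinearMap.id (fun _ _ => rfl)
  have hI : I ≠ 0 := fun h => by
    obtain ⟨v, hv⟩ := exists_ne (0 : V)
    exact hv (congrArg (fun f => f.toLinearMap v) h)
  obtain ⟨c, hcI⟩ := (finrank_eq_one_iff_of_nonzero' I hI).1 h3 P
  have hcv : ∀ v, p v = c • v := fun v => (congrArg (fun f => f.toLinearMap v) hcI).symm
  by_cases hc0 : c = 0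
  · left
    rw [Submodule.eq_bot_iff]
    intro w hw
    rw [← hp1 w hw, hcv, hc0, zero_smul]
  · right
    have : W' = ⊥ := by
      rw [Submodule.eq_bot_iff]
      intro w hw
      have := hp2 w hw
      rw [hcv] at this
      exact (smul_eq_zero.1 this).resolve_left hc0
    have h4 := hc.sup_eq_top
    rwa [this, sup_bot_eq] at h4

lemma isIrrChar_iff (α : G → ℂ) : IsIrrChar G α ↔ ∃ V : FDRep ℂ G,
    Irr (V.ρ : Representation ℂ G V) ∧ V.character = α := by
  constructor
  · rintro ⟨V, h, rfl⟩; exact ⟨V, irr_of_simple V h, rfl⟩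
  · rintro ⟨V, h, rfl⟩; exact ⟨FDRep.of V.ρ, simple_of_irr h, rfl⟩

lemma irr_equiv {V W : FDRep ℂ G} (hV : Irr (V.ρ : Representation ℂ G V))
    (hW : Irr (W.ρ : Representation ℂ G W)) (h : V.character = W.character) :
    ∃ e : V ≃ₗ[ℂ] W, ∀ g v, e (V.ρ g v) = W.ρ g (e v) := by
  haveI := irr_isIrreducible hV
  haveI := irr_isIrreducible hW
  have h1 := Representation.char_orthonormal (W.ρ : Representation ℂ G W)
    (V.ρ : Representation ℂ G V)
  have h2 := Representation.char_orthonormal (V.ρ : Representation ℂ G V)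
    (V.ρ : Representation ℂ G V)
  rw [if_pos ⟨Representation.Equiv.refl _⟩] at h2
  have h3 : Representation.character (V.ρ : Representation ℂ G V) =
    Representation.character (W.ρ : Representation ℂ G W) := h
  rw [← h3, h2] at h1
  by_cases hn : Nonempty (Representation.Equiv (V.ρ : Representation ℂ G V)
    (W.ρ : Representation ℂ G W))
  · obtain ⟨e⟩ := hn
    exact ⟨e.toLinearEquiv, fun g v => LinearMap.congr_fun (e.isIntertwining' g) v⟩
  · rw [if_neg hn] at h1
    norm_num at h1

open scoped ComplexOrder in
lemma conj_char {X : Type*} [AddCommGroup X] [Module ℂ X] [FiniteDimensional ℂ X]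
    (ρ : Representation ℂ G X) (g : G) :
    (starRingEnd ℂ) (ρ.character g) = ρ.character g⁻¹ := by
  let b := Module.finBasis ℂ X
  let n := Module.finrank ℂ X
  let A : G → Matrix (Fin n) (Fin n) ℂ := fun g => LinearMap.toMatrix b b (ρ g)
  have hA : ∀ x y, A (x * y) = A x * A y := fun x y => by
    simp only [A, map_mul]; exact LinearMap.toMatrix_mul b _ _
  have hA1 : A 1 = 1 := by simp only [A, map_one]; exact LinearMap.toMatrix_one b
  have ht : ∀ x, ρ.character x = (A x).trace := fun x => LinearMap.trace_eq_matrix_trace ℂ b (ρ x)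
  let P : Matrix (Fin n) (Fin n) ℂ := ∑ x, (A x).conjTranspose * A x
  have hP : (A g).conjTranspose * P * A g = P := by
    simp only [P, Finset.mul_sum, Finset.sum_mul]
    rw [← Equiv.sum_comp (Equiv.mulRight g) (fun x => (A x).conjTranspose * A x)]
    refine Finset.sum_congr rfl fun x _ => ?_
    simp only [Equiv.coe_mulRight, hA, Matrix.conjTranspose_mul, Matrix.mul_assoc]
  have hpos : P.PosDef := by
    have : ∀ x ∈ (Finset.univ : Finset G), ((A x).conjTranspose * A x).PosDef := fun x _ => by
      apply Matrix.PosDef.conjTranspose_mul_self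
      apply Matrix.mulVec_injective_of_isUnit
      exact IsUnit.of_mul_eq_one (A x⁻¹) (by rw [← hA, mul_inv_cancel, hA1])
    exact Matrix.posDef_sum Finset.univ_nonempty this
  have hu : IsUnit P.det := hpos.isUnit.map Matrix.detMonoidHom
  have h1 : A g⁻¹ = P⁻¹ * (A g).conjTranspose * P := by
    have h2 : A g * A g⁻¹ = 1 := by rw [← hA, mul_inv_cancel, hA1]
    calc A g⁻¹ = P⁻¹ * P * A g⁻¹ := by rw [Matrix.nonsing_inv_mul _ hu, one_mul]
      _ = P⁻¹ * ((A g).conjTranspose * P * A g) * A g⁻¹ := by rw [hP]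
      _ = P⁻¹ * (A g).conjTranspose * P * (A g * A g⁻¹) := by simp only [Matrix.mul_assoc]
      _ = _ := by rw [h2, mul_one]
  rw [ht, ht, h1, Matrix.trace_mul_comm, ← Matrix.mul_assoc, Matrix.mul_nonsing_inv _ hu, one_mul,
    Matrix.trace_conjTranspose]
  rfl

lemma finite_irrChar : {α : G → ℂ | IsIrrChar G α}.Finite := by
  have : LinearIndependent ℂ (fun α : {α : G → ℂ | IsIrrChar G α} => (α : G → ℂ)) := by
    rw [linearIndependent_iff']
    intro s c hs j hj
    have horth : ∀ i ∈ s, (Nat.card G : ℂ)⁻¹ * ∑ g, i.1 g * j.1 g⁻¹ = if i = j then 1 else 0 := by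
      rintro ⟨_, V, hV, rfl⟩ _
      obtain ⟨_, W, hW, rfl⟩ := j
      haveI := irr_isIrreducible (irr_of_simple V hV)
      haveI := irr_isIrreducible (irr_of_simple W hW)
      have h1 := Representation.char_orthonormal (V.ρ : Representation ℂ G V)
        (W.ρ : Representation ℂ G W)
      refine Eq.trans h1 ?_
      by_cases hn : Nonempty (Representation.Equiv (W.ρ : Representation ℂ G W)
          (V.ρ : Representation ℂ G V))
      · rw [if_pos hn, if_pos]
        obtain ⟨e⟩ := hn
        exact Subtype.ext (Representation.char_iso e).symm
      · rw [if_neg hn, if_neg]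
        intro h
        obtain ⟨e, he⟩ := irr_equiv (irr_of_simple W hW) (irr_of_simple V hV)
          (congrArg Subtype.val h).symm
        exact hn ⟨Representation.Equiv.mk e fun g => LinearMap.ext (he g)⟩
    have h2 : ∑ i ∈ s, c i * ((Nat.card G : ℂ)⁻¹ * ∑ g, i.1 g * j.1 g⁻¹) = 0 := by
      have : ∀ g, ∑ i ∈ s, c i * i.1 g = 0 := fun g => by
        have := congrFun hs g
        simpa using this
      calc _ = (Nat.card G : ℂ)⁻¹ * ∑ g, (∑ i ∈ s, c i * i.1 g) * j.1 g⁻¹ := by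
            simp only [Finset.sum_mul, Finset.mul_sum]
            rw [Finset.sum_comm]
            refine Finset.sum_congr rfl fun _ _ => Finset.sum_congr rfl fun _ _ => by ring
        _ = 0 := by simp [this]
    rw [Finset.sum_congr rfl fun i hi => by rw [horth i hi]] at h2
    simpa [hj] using h2
  exact this.setFinite
end Chars
end EtaDl

end

section
open scoped Classical BigOperators
namespace EtaDl
section Weights
variable {G : Type} [Group G]

/-- `lam` is a weight of `L` in the representation -/
def IsWt {X : Type*} [AddCommGroup X] [Module ℂ X] (σ : Representation ℂ G X) (L : Subgroup G)
    (lam : L →* ℂˣ) : Prop := ∃ v : X, v ≠ 0 ∧ ∀ l : L, σ l v = ((lam l : ℂˣ) : ℂ) • v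

/-- `alpha` is an irreducible character having `lam` as weight -/
def WtChar (α : G → ℂ) (L : Subgroup G) (lam : L →* ℂˣ) : Prop :=
  ∃ V : FDRep ℂ G, Irr (V.ρ : Representation ℂ G V) ∧ V.character = α ∧
    IsWt (V.ρ : Representation ℂ G V) L lam

/-- `K` is in the kernel of the irreducible character `alpha` -/
def Triv (α : G → ℂ) (K : Subgroup G) : Prop :=
  ∃ V : FDRep ℂ G, Irr (V.ρ : Representation ℂ G V) ∧ V.character = α ∧ ∀ k ∈ K, V.ρ k = 1

lemma Triv.mono {α : G → ℂ} {K L : Subgroup G} (h : Triv α L) (hKL : K ≤ L) : Triv α K := by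
  obtain ⟨V, h1, h2, h3⟩ := h
  exact ⟨V, h1, h2, fun k hk => h3 k (hKL hk)⟩

/-- linear characters, additively -/
def LinDual (L : Subgroup G) : Type := Additive (L →* ℂˣ)

noncomputable instance (L : Subgroup G) : AddCommGroup (LinDual L) :=
  inferInstanceAs (AddCommGroup (Additive (L →* ℂˣ)))

/-- to additive -/
def LinDual.mk {L : Subgroup G} (lam : L →* ℂˣ) : LinDual L := Additive.ofMul lam

/-- from additive -/
def LinDual.toHom {L : Subgroup G} (lam : LinDual L) : L →* ℂˣ := Additive.toMul lam

lemma LinDual.ext {L : Subgroup G} {a b : LinDual L} (h : ∀ l, a.toHom l = b.toHom l) : a = b :=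
  Additive.toMul.injective (MonoidHom.ext h)

lemma LinDual.toHom_zero {L : Subgroup G} (l : L) : (0 : LinDual L).toHom l = 1 := rfl
lemma LinDual.toHom_add {L : Subgroup G} (a b : LinDual L) (l : L) :
    (a + b).toHom l = a.toHom l * b.toHom l := rfl
lemma LinDual.toHom_neg {L : Subgroup G} (a : LinDual L) (l : L) :
    (-a).toHom l = (a.toHom l)⁻¹ := rfl

/-- action on linear characters -/
noncomputable def dualRep (L : Subgroup G) [L.Normal] :
    Representation ℤ G (LinDual L) where
  toFun g := AddMonoidHom.toIntLinearMap
    { toFun := fun lam => LinDual.mk (lam.toHom.comp (MulAut.conjNormal g⁻¹).toMonoidHom)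
      map_zero' := rfl
      map_add' := fun _ _ => rfl }
  map_one' := by
    ext lam
    apply LinDual.ext
    intro l
    change lam.toHom (MulAut.conjNormal (1 : G)⁻¹ l) = lam.toHom l
    simp
  map_mul' x y := by
    ext lam
    apply LinDual.ext
    intro l
    change lam.toHom (MulAut.conjNormal (x * y)⁻¹ l) =
      lam.toHom (MulAut.conjNormal y⁻¹ (MulAut.conjNormal x⁻¹ l))
    rw [mul_inv_rev, map_mul, MulAut.mul_apply]

lemma dualRep_apply (L : Subgroup G) [L.Normal] (g : G) (lam : LinDual L) (l l' : L)
    (h : (l' : G) = g⁻¹ * l * g) : (dualRep L g lam).toHom l = lam.toHom l' := by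
  have : l' = MulAut.conjNormal g⁻¹ l := by
    apply Subtype.ext
    rw [h, MulAut.conjNormal_apply, inv_inv]
  rw [this]; rfl

variable [Fintype G]

/-- the set counted by eta -/
def etaSet (χ : G → ℂ) : Set (G → ℂ) := {α : G → ℂ | IsIrrChar G α ∧ α ≠ (fun _ => 1) ∧
    charInner G (fun g => χ g * (starRingEnd ℂ) (χ g)) α ≠ 0}

lemma etaSet_finite (χ : G → ℂ) : (etaSet χ).Finite :=
  finite_irrChar.subset fun _ h => h.1

lemma WtChar.transfer {α : G → ℂ} {L : Subgroup G} {lam : L →* ℂˣ} (h : WtChar α L lam)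
    {V : FDRep ℂ G} (hV : Irr (V.ρ : Representation ℂ G V)) (hα : V.character = α) :
    IsWt (V.ρ : Representation ℂ G V) L lam := by
  obtain ⟨W, hW, hWα, w, hw0, hw⟩ := h
  obtain ⟨e, he⟩ := irr_equiv hW hV (hWα.trans hα.symm)
  refine ⟨e w, by simpa using hw0, fun l => ?_⟩
  rw [← he, hw, map_smul]

lemma WtChar.not_triv {α : G → ℂ} {L : Subgroup G} {lam : L →* ℂˣ} (h : WtChar α L lam)
    (hlam : lam ≠ 1) : ¬ Triv α L := by
  rintro ⟨V, h1, h2, h3⟩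
  obtain ⟨v, hv0, hv⟩ := h.transfer h1 h2
  apply hlam
  ext l
  have := hv l
  rw [h3 l l.2] at this
  have h4 : (((lam l : ℂˣ) : ℂ) - 1) • v = 0 := by
    rw [sub_smul, ← this, one_smul]; exact sub_self v
  have := (smul_eq_zero.1 h4).resolve_right hv0
  simpa using sub_eq_zero.1 this

lemma wt_conj_aux {X : Type*} [AddCommGroup X] [Module ℂ X] {σ : Representation ℂ G X}
    (hirr : Irr σ) {L : Subgroup G} [L.Normal] {lam mu : L →* ℂˣ} (h : IsWt σ L lam)
    (h' : IsWt σ L mu) : ∃ g, dualRep L g (LinDual.mk lam) = LinDual.mk mu := by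
  obtain ⟨v, hv0, hv⟩ := h
  obtain ⟨w, hw0, hw⟩ := h'
  have hspan : Submodule.span ℂ (Set.range fun g => σ g v) = ⊤ := by
    refine (hirr.2 _ fun g => ?_).resolve_left ?_
    · unfold tr
      rw [Submodule.map_span, Submodule.span_le]
      rintro _ ⟨_, ⟨x, rfl⟩, rfl⟩
      refine Submodule.subset_span ⟨g * x, ?_⟩
      simp
    · intro h
      apply hv0
      have : σ 1 v ∈ Submodule.span ℂ (Set.range fun g => σ g v) :=
        Submodule.subset_span ⟨1, rfl⟩
      rw [h, map_one] at this
      simpa using this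
  let e : X →ₗ[ℂ] X := ∑ l : L, ((mu l)⁻¹ : ℂˣ).1 • σ l
  have hew : e w ≠ 0 := by
    have : e w = (Fintype.card L : ℂ) • w := by
      simp only [e, LinearMap.sum_apply, LinearMap.smul_apply, hw, smul_smul]
      simp [Finset.card_univ, Nat.cast_smul_eq_nsmul]
    rw [this]
    exact smul_ne_zero (by exact_mod_cast Fintype.card_ne_zero) hw0
  have : ∃ g, e (σ g v) ≠ 0 := by
    by_contra hcon
    push Not at hcon
    apply hew
    have : w ∈ LinearMap.ker e := by
      have h1 : Submodule.span ℂ (Set.range fun g => σ g v) ≤ LinearMap.ker e := by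
        rw [Submodule.span_le]; rintro _ ⟨g, rfl⟩; exact hcon g
      rw [hspan] at h1
      exact h1 Submodule.mem_top
    exact this
  obtain ⟨g, hg⟩ := this
  refine ⟨g, ?_⟩
  set nu : L →* ℂˣ := (dualRep L g (LinDual.mk lam)).toHom with hnu
  have hl : ∀ l : L, σ l (σ g v) = ((nu l : ℂˣ) : ℂ) • σ g v := fun l => by
    have hmem : g⁻¹ * l * g ∈ L := by
      have := ‹L.Normal›.conj_mem l l.2 g⁻¹
      simpa using this
    have h1 : nu l = lam ⟨g⁻¹ * l * g, hmem⟩ :=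
      dualRep_apply L g (LinDual.mk lam) l ⟨_, hmem⟩ rfl
    have h2 := hv ⟨g⁻¹ * l * g, hmem⟩
    rw [h1, ← map_smul, ← h2, ← Module.End.mul_apply, ← Module.End.mul_apply, ← map_mul, ← map_mul]
    congr 2
    group
  by_contra hne
  apply hg
  have hf : ((Units.coeHom ℂ).comp (mu⁻¹ * nu) : L →* ℂ) ≠ 1 := by
    intro h
    apply hne
    apply LinDual.ext
    intro l
    change nu l = mu l
    have := DFunLike.congr_fun h l
    have h3 : (mu l)⁻¹ * nu l = 1 := Units.ext this
    rw [inv_mul_eq_one] at h3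
    rw [h3]
  have := sum_hom_units_eq_zero _ hf
  simp only [e, LinearMap.sum_apply, LinearMap.smul_apply, hl, smul_smul, ← Finset.sum_smul]
  have h4 : ∑ l : L, ((mu l)⁻¹ : ℂˣ).1 * (nu l).1 = 0 := by
    rw [← this]; refine Finset.sum_congr rfl fun l _ => ?_
    simp
  rw [h4, zero_smul]

lemma wt_conj {α : G → ℂ} {L : Subgroup G} [L.Normal] {lam mu : L →* ℂˣ} (h : WtChar α L lam)
    (h' : WtChar α L mu) : ∃ g, dualRep L g (LinDual.mk lam) = LinDual.mk mu := by
  obtain ⟨V, h1, h2, h3⟩ := h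
  exact wt_conj_aux h1 h3 (h'.transfer h1 h2)

lemma WtChar.triv {α : G → ℂ} {L K : Subgroup G} [K.Normal] {lam : L →* ℂˣ} (h : WtChar α L lam)
    (hKL : K ≤ L) (hlam : ∀ l : L, (l : G) ∈ K → lam l = 1) : Triv α K := by
  obtain ⟨V, h1, h2, v, hv0, hv⟩ := h
  refine ⟨V, h1, h2, ?_⟩
  let F : Submodule ℂ V := 
    { carrier := {x | ∀ k ∈ K, V.ρ k x = x}
      add_mem' := fun {a b} ha hb k hk => by rw [map_add, ha k hk, hb k hk]
      zero_mem' := fun k _ => map_zero _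
      smul_mem' := fun c x hx k hk => by rw [map_smul, hx k hk] }
  have : F = ⊤ := by
    refine (h1.2 F fun g => ?_).resolve_left fun h => ?_
    · rintro _ ⟨x, hx, rfl⟩ k hk
      have h3 : g⁻¹ * k * g ∈ K := by
        have := ‹K.Normal›.conj_mem k hk g⁻¹
        simpa using this
      have h4 := hx _ h3
      calc V.ρ k (V.ρ g x) = V.ρ g (V.ρ (g⁻¹ * k * g) x) := by
            rw [← Module.End.mul_apply, ← Module.End.mul_apply, ← map_mul, ← map_mul]
            congr 2
            group
        _ = _ := by rw [h4]
    · apply hv0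
      have : v ∈ F := fun k hk => by
        have := hv ⟨k, hKL hk⟩
        rw [hlam ⟨k, hKL hk⟩ hk] at this
        simpa using this
      rw [h] at this
      exact this
  intro k hk
  ext x
  have : x ∈ F := this ▸ Submodule.mem_top
  exact this k hk

/-- a weight vector lies in an irreducible subrepresentation (up to change) -/
lemma exists_irr_wt {X : Type*} [AddCommGroup X] [Module ℂ X] [FiniteDimensional ℂ X]
    (σ : Representation ℂ G X) {L : Subgroup G} {lam : L →* ℂˣ} (h : IsWt σ L lam) :
    ∃ R : Subrepresentation σ, Irr R.toRepresentation ∧ IsWt R.toRepresentation L lam := by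
  obtain ⟨v, hv0, hv⟩ := h
  let E : Submodule ℂ X := 
    { carrier := {x | ∀ l : L, σ l x = ((lam l : ℂˣ) : ℂ) • x}
      add_mem' := fun {a b} ha hb k => by rw [map_add, ha k, hb k, smul_add]
      zero_mem' := fun k => by rw [map_zero, smul_zero]
      smul_mem' := fun c x hx k => by rw [map_smul, hx k, smul_comm] }
  obtain ⟨R, hR, hmin⟩ := (wellFounded_lt (α := Submodule ℂ X)).has_min
    {R | (∀ g, tr σ g R ≤ R) ∧ R ⊓ E ≠ ⊥} ⟨⊤, fun g => le_top, fun h => hv0 (by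
      have : v ∈ (⊤ ⊓ E : Submodule ℂ X) := ⟨trivial, hv⟩
      rw [h] at this; exact this)⟩
  obtain ⟨hR1, hR2⟩ := hR
  obtain ⟨w, hw, hw0⟩ := Submodule.exists_mem_ne_zero_of_ne_bot hR2
  refine ⟨⟨R, fun g v hv => hR1 g (mem_tr hv)⟩, ⟨⟨⟨w, hw.1⟩, 0, fun h => hw0 (by
    simpa using congrArg Subtype.val h)⟩, fun W hW => ?_⟩, ⟨w, hw.1⟩, fun h => hw0 (by
    simpa using congrArg Subtype.val h), fun l => Subtype.ext (hw.2 l)⟩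
  set W1 : Submodule ℂ X := W.map R.subtype with hW1
  have hW1R : W1 ≤ R := by rintro _ ⟨x, _, rfl⟩; exact x.2
  have hW1i : ∀ g, tr σ g W1 ≤ W1 := by
    rintro g _ ⟨_, ⟨x, hx, rfl⟩, rfl⟩
    exact ⟨_, hW g (mem_tr hx), rfl⟩
  obtain ⟨W2, hW2, hc⟩ := exists_compl σ W1 hW1i
  by_cases hE : W1 ⊓ E = ⊥
  · left
    by_contra hWb
    have hlt : W2 ⊓ R < R := by
      refine lt_of_le_of_ne inf_le_right fun h => hWb ?_
      have h1 : W1 ≤ W2 := hW1R.trans (by rw [← h]; exact inf_le_left)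
      have h2 : W1 = ⊥ := by
        have := hc.disjoint.eq_bot
        rwa [inf_eq_left.2 h1] at this
      exact Submodule.map_injective_of_injective R.injective_subtype (by rw [Submodule.map_bot]; exact h2)
    have hE2 : (W2 ⊓ R) ⊓ E = ⊥ := by
      by_contra hne
      exact hmin (W2 ⊓ R) ⟨fun g => by
        rw [tr_inf]; exact inf_le_inf (hW2 g) (hR1 g), hne⟩ hlt
    have hwm : w ∈ W1 ⊔ W2 := hc.sup_eq_top ▸ Submodule.mem_top
    obtain ⟨a, ha, b, hb, hab⟩ := Submodule.mem_sup.1 hwm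
    have hbR : b ∈ R := by
      have : b = w - a := by rw [← hab]; abel
      rw [this]; exact R.sub_mem hw.1 (hW1R ha)
    have key : ∀ l : L, σ l a = ((lam l : ℂˣ) : ℂ) • a ∧ σ l b = ((lam l : ℂˣ) : ℂ) • b := by
      intro l
      have h1 := hw.2 l
      rw [← hab, map_add, smul_add] at h1
      have h2 : σ l a - ((lam l : ℂˣ) : ℂ) • a = ((lam l : ℂˣ) : ℂ) • b - σ l b := by
        rw [sub_eq_sub_iff_add_eq_add, h1]; abel
      have h3 : σ l a - ((lam l : ℂˣ) : ℂ) • a ∈ W1 ⊓ W2 := by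
        refine ⟨W1.sub_mem (hW1i _ (mem_tr ha)) (W1.smul_mem _ ha), ?_⟩
        rw [h2]
        exact W2.sub_mem (W2.smul_mem _ hb) (hW2 _ (mem_tr hb))
      rw [hc.disjoint.eq_bot, Submodule.mem_bot] at h3
      rw [h3] at h2
      exact ⟨sub_eq_zero.1 h3, (sub_eq_zero.1 h2.symm).symm⟩
    have ha0 : a ∈ W1 ⊓ E := ⟨ha, fun l => (key l).1⟩
    have hb0 : b ∈ (W2 ⊓ R) ⊓ E := ⟨⟨hb, hbR⟩, fun l => (key l).2⟩
    rw [hE, Submodule.mem_bot] at ha0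
    rw [hE2, Submodule.mem_bot] at hb0
    exact hw0 (by rw [← hab, ha0, hb0, add_zero])
  · right
    have : W1 = R := by
      by_contra hne
      exact hmin W1 ⟨hW1i, hE⟩ (lt_of_le_of_ne hW1R hne)
    rw [eq_top_iff]
    rintro ⟨x, hx⟩ _
    have hx' : x ∈ W1 := this ▸ hx
    obtain ⟨y, hy, rfl⟩ := hx'
    exact hy

/-- weights of `End X` give members of the eta set -/
lemma weight_eta {X : Type} [AddCommGroup X] [Module ℂ X] [FiniteDimensional ℂ X]
    (ρ : Representation ℂ G X) {L : Subgroup G} {lam : L →* ℂˣ} (hlam : lam ≠ 1)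
    (T : X →ₗ[ℂ] X) (hT0 : T ≠ 0)
    (hT : ∀ l : L, ρ l * T * ρ (l : G)⁻¹ = ((lam l : ℂˣ) : ℂ) • T) :
    ∃ α ∈ etaSet ρ.character, WtChar α L lam := by
  obtain ⟨R, hR, hRw⟩ := exists_irr_wt (Representation.linHom ρ ρ) (L := L) (lam := lam)
    ⟨T, hT0, fun l => by
      rw [← hT l, Representation.linHom_apply]; rfl⟩
  set σ := R.toRepresentation with hσ
  have hw : WtChar σ.character L lam := ⟨FDRep.of σ, hR, rfl, hRw⟩
  refine ⟨σ.character, ⟨⟨FDRep.of σ, simple_of_irr hR, rfl⟩, ?_, ?_⟩, hw⟩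
  · intro h1
    apply hw.not_triv hlam
    refine ⟨FDRep.of (Representation.trivial ℂ G ℂ), ⟨inferInstanceAs (Nontrivial ℂ), fun W _ => ?_⟩, ?_,
      fun k _ => rfl⟩
    · have := Ideal.eq_bot_or_top (K := ℂ) W
      exact this
    · rw [h1]
      ext g
      have : Representation.character (Representation.trivial ℂ G ℂ) g = 1 := by
        unfold Representation.character
        have : Representation.trivial ℂ G ℂ g = 1 := rfl
        rw [this]
        simp
      exact this
  · unfold charInner
    have h1 := Representation.card_inv_mul_sum_char_mul_char_eq_finrank σ
      (Representation.linHom ρ ρ)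
    have h2 : (Fintype.card G : ℂ)⁻¹ * ∑ g : G, ρ.character g * (starRingEnd ℂ) (ρ.character g) *
        (starRingEnd ℂ) (σ.character g) = Module.finrank ℂ
          (Representation.IntertwiningMap σ (Representation.linHom ρ ρ)) := by
      rw [← h1, Nat.card_eq_fintype_card]
      congr 1
      refine Finset.sum_congr rfl fun g _ => ?_
      rw [conj_char, conj_char, Representation.char_linHom]
      ring
    rw [h2]
    let I := LinearMap.intertwiningMap_of_isIntertwiningMap (ρ := σ)
      (σ := Representation.linHom ρ ρ) R.toSubmodule.subtype (fun _ _ => rfl)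
    have hI : I ≠ 0 := fun h => by
      haveI := hR.1
      obtain ⟨v, hv⟩ := exists_ne (0 : R.toSubmodule)
      apply hv
      apply Subtype.ext
      exact congrArg (fun f => f.toLinearMap v) h
    have : 0 < Module.finrank ℂ
          (Representation.IntertwiningMap σ (Representation.linHom ρ ρ)) := by
      haveI : Module.Finite ℂ (Representation.IntertwiningMap σ (Representation.linHom ρ ρ)) := by
        exact Module.Finite.equiv (Representation.invariantsEquivIntertwiningMap σ (Representation.linHom ρ ρ))
      exact Module.finrank_pos_iff_exists_ne_zero.2 ⟨I, hI⟩
    exact_mod_cast this.ne'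
end Weights
end EtaDl

end

section
open scoped Classical BigOperators commutatorElement
namespace EtaDl
section KL
variable {G : Type} [Group G] [Fintype G]

/-- numerical constant -/
@[irreducible] def cB : ℕ := 441

lemma orbit_bound_c {G V : Type*} [Group G] [Finite G] [Group.IsSolvable G] [AddCommGroup V]
    [Finite V]
    {ρ : Representation ℤ G V} (hirr : Irr ρ) (S : Finset V)
    (hS : ∀ v : V, v ≠ 0 → ∃ s ∈ S, ∃ g, ρ g s = v) :
    ∀ x ∈ dsr (⊤ : Subgroup G) (10 * S.card + cB), ρ x = 1 := by
  unfold cB; exact orbit_bound hirr S hS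

instance (L : Subgroup G) : Finite (LinDual L) :=
  inferInstanceAs (Finite (L →* ℂˣ))

lemma chief_dual [Group.IsSolvable G] (L K N : Subgroup G) [L.Normal] [K.Normal] [N.Normal]
    (hKL : K ≤ L) (hchief : ∀ M : Subgroup G, M.Normal → K ≤ M → M ≤ L → M = K ∨ M = L)
    (W : Submodule ℤ (LinDual L)) (hW0 : W ≠ ⊥)
    (hWK : ∀ lam ∈ W, ∀ l : L, (l : G) ∈ K → lam.toHom l = 1)
    (hWN : ∀ n ∈ N, tr (dualRep L) n W ≤ W) (S : Finset (G → ℂ))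
    (hwt : ∀ lam ∈ W, lam ≠ 0 → ∃ α ∈ S, WtChar α L lam.toHom) :
    ⁅dsr N (10 * S.card + cB), L⁆ ≤ K := by
  obtain ⟨W1, ⟨hW1, hW10, hW1N⟩, hmin⟩ := (wellFounded_lt (α := Submodule ℤ (LinDual L))).has_min
    {U | U ≤ W ∧ U ≠ ⊥ ∧ ∀ n ∈ N, tr (dualRep L) n U ≤ U} ⟨W, le_rfl, hW0, hWN⟩
  have hmin' : ∀ U ≤ W1, U ≠ ⊥ → (∀ n ∈ N, tr (dualRep L) n U ≤ U) → U = W1 := by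
    intro U hU hU0 hUN
    by_contra hne
    exact hmin U ⟨hU.trans hW1, hU0, hUN⟩ (lt_of_le_of_ne hU hne)
  have hNst : N ≤ stab (dualRep L) W1 := by
    intro n hn
    rw [mem_stab]
    apply le_antisymm (hW1N n hn)
    have := tr_mono (ρ := dualRep L) n (hW1N n⁻¹ (N.inv_mem hn))
    rwa [tr_tr_inv] at this
  have hcap : ∀ g, ∀ lam ∈ W1, lam ≠ 0 → dualRep L g lam ∈ W1 → W1 ≤ tr (dualRep L) g W1 := by
    intro g lam hlam h0 hg
    have hne : dualRep L g lam ≠ 0 := fun h => h0 (by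
      rw [← rho_inv_apply (dualRep L) g lam, h, map_zero])
    have := hmin' (W1 ⊓ tr (dualRep L) g W1) inf_le_left (fun h => hne (by
      have h1 : dualRep L g lam ∈ W1 ⊓ tr (dualRep L) g W1 := ⟨hg, mem_tr hlam⟩
      rw [h] at h1; exact h1)) (fun n hn => by
        rw [tr_inf]
        refine inf_le_inf (hW1N n hn) ?_
        rw [← tr_mul]
        have h2 : n * g = g * (g⁻¹ * n * g) := by group
        rw [h2, tr_mul]
        apply tr_mono
        apply hW1N
        have := ‹N.Normal›.conj_mem n hn g⁻¹
        simpa using this)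
    rw [← this]
    exact inf_le_right.trans (by rw [this])
  have hstab : ∀ g, ∀ lam ∈ W1, lam ≠ 0 → dualRep L g lam ∈ W1 → g ∈ stab (dualRep L) W1 := by
    intro g lam hlam h0 hg
    rw [mem_stab]
    refine le_antisymm ?_ (hcap g lam hlam h0 hg)
    have := hcap g⁻¹ (dualRep L g lam) hg (fun h => h0 (by
      rw [← rho_inv_apply (dualRep L) g lam, h, map_zero])) (by rwa [rho_inv_apply])
    have := tr_mono (ρ := dualRep L) g this
    rwa [tr_tr_inv] at this
  have hirr : Irr (restr (dualRep L) W1) := by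
    refine ⟨Submodule.nontrivial_iff_ne_bot.2 hW10, fun U hU => ?_⟩
    have hinj : Function.Injective (Submodule.map W1.subtype) :=
      Submodule.map_injective_of_injective W1.injective_subtype
    by_cases hb : U = ⊥
    · exact Or.inl hb
    · right
      have := hmin' (U.map W1.subtype) (Submodule.map_subtype_le _ _)
        (fun h => hb (hinj (by rw [h, Submodule.map_bot]))) (fun n hn => by
          have h1 := map_tr_restr (ρ := dualRep L) W1 ⟨n, hNst hn⟩ U
          rw [← h1]
          exact Submodule.map_mono (hU _))
      apply hinj
      rw [this, Submodule.map_subtype_top]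
  let s : (G → ℂ) → W1 := fun α =>
    if h : ∃ lam : W1, lam ≠ 0 ∧ WtChar α L lam.1.toHom then h.choose else 0
  have hob := orbit_bound_c hirr (S.image s) (fun v hv => by
    have hv' : (v : LinDual L) ≠ 0 := fun h => hv (Subtype.ext h)
    obtain ⟨α, hα, hw⟩ := hwt v (hW1 v.2) hv'
    have hex : ∃ lam : W1, lam ≠ 0 ∧ WtChar α L lam.1.toHom := ⟨v, hv, hw⟩
    have hs : s α = hex.choose := dif_pos hex
    have hsp := hex.choose_spec
    rw [← hs] at hsp
    obtain ⟨g, hg⟩ := wt_conj hsp.2 hw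
    have hg' : dualRep L g (s α : LinDual L) = v := hg
    have hgs := hstab g (s α) (s α).2 (fun h => hsp.1 (Subtype.ext h)) (by rw [hg']; exact v.2)
    exact ⟨s α, Finset.mem_image_of_mem _ hα, ⟨g, hgs⟩, Subtype.ext hg'⟩)
  have hfix : ∀ x ∈ dsr N (10 * S.card + cB), ∀ lam ∈ W1, dualRep L x lam = lam := by
    intro x hx lam hlam
    have h1 : dsr N (10 * S.card + cB) ≤
        (dsr (⊤ : Subgroup (stab (dualRep L) W1)) (10 * (S.image s).card + cB)).map
          (stab (dualRep L) W1).subtype := by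
      rw [map_dsr]
      refine (dsr_mono ?_ _).trans (dsr_anti _ ?_)
      · rw [← MonoidHom.range_eq_map, Subgroup.range_subtype]; exact hNst
      · have := Finset.card_image_le (s := S) (f := s)
        omega
    obtain ⟨y, hy, rfl⟩ := h1 hx
    have := hob y hy
    have := LinearMap.congr_fun this ⟨lam, hlam⟩
    exact congrArg Subtype.val this
  obtain ⟨lam, hlam, hlam0⟩ := Submodule.exists_mem_ne_zero_of_ne_bot hW10
  haveI := dsr_normal N (10 * S.card + cB)
  set D := dsr N (10 * S.card + cB) with hD
  have hDL : ⁅D, L⁆ ≤ L := Subgroup.commutator_le_right _ _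
  rcases hchief (⁅D, L⁆ ⊔ K) inferInstance le_sup_right (sup_le hDL hKL) with h | h
  · exact le_sup_left.trans h.le
  · exfalso
    apply hlam0
    have hker : ⁅D, L⁆ ⊔ K ≤ lam.toHom.ker.map L.subtype := by
      refine sup_le ?_ ?_
      · rw [Subgroup.commutator_le]
        intro x hx l hl
        have hxl : x⁻¹ * l * x ∈ L := by
          have := ‹L.Normal›.conj_mem l hl x⁻¹
          simpa using this
        have hxl' : x * l * x⁻¹ ∈ L := ‹L.Normal›.conj_mem l hl x
        have h1 := dualRep_apply L x lam ⟨x * l * x⁻¹, hxl'⟩ ⟨l, hl⟩ (by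
          simp [mul_assoc])
        rw [hfix x hx lam hlam] at h1
        refine ⟨⟨x * l * x⁻¹, hxl'⟩ * ⟨l, hl⟩⁻¹, ?_, ?_⟩
        · rw [SetLike.mem_coe, MonoidHom.mem_ker, map_mul, map_inv, h1, mul_inv_cancel]
        · simp [commutatorElement_def]
      · intro k hk
        exact ⟨⟨k, hKL hk⟩, hWK lam (hW1 hlam) ⟨k, hKL hk⟩ hk, rfl⟩
    rw [h] at hker
    apply LinDual.ext
    intro l
    obtain ⟨l', hl', hll⟩ := hker l.2
    have : l' = l := Subtype.ext hll
    rw [← this]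
    exact hl'
end KL
end EtaDl

end

section
open scoped Classical BigOperators commutatorElement
namespace EtaDl
section PermPart
variable {G : Type} [Group G] {X : Type} [AddCommGroup X] [Module ℂ X]

lemma exists_proj {ρ : Representation ℂ G X} (hirr : Irr ρ) {X1 : Submodule ℂ X}
    (hX1 : IsBlock ρ X1) : ∃ T : X →ₗ[ℂ] X, (∀ x ∈ X1, T x = x) ∧ (∀ x ∈ Yc ρ X1 X1, T x = 0) := by
  have hc := hirr.isCompl hX1
  refine ⟨X1.subtype ∘ₗ (Submodule.projectionOnto X1 _ hc), fun w hw => ?_, fun w hw => ?_⟩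
  · exact congrArg Subtype.val (Submodule.projectionOnto_apply_left hc ⟨w, hw⟩)
  · exact congrArg Subtype.val (Submodule.projectionOnto_apply_right hc ⟨w, hw⟩)

/-- separating linear characters -/
lemma exists_linchar [Finite G] (L U : Subgroup G) (hconj : ∀ l ∈ L, ∀ x ∈ L ⊓ U, l * x * l⁻¹ ∈ L ⊓ U)
    (hLL : ⁅L, L⁆ ≤ U) (hLU : ¬ L ≤ U) :
    ∃ lam : L →* ℂˣ, lam ≠ 1 ∧ ∀ l : L, (l : G) ∈ U → lam l = 1 := by
  let M : Subgroup L := U.subgroupOf L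
  haveI : M.Normal := ⟨fun n hn g => by
    have := hconj g g.2 n ⟨n.2, hn⟩
    exact this.2⟩
  letI : CommGroup (L ⧸ M) := 
    { (inferInstance : Group (L ⧸ M)) with
      mul_comm := fun a b => by
        induction a using QuotientGroup.induction_on with | H a => ?_
        induction b using QuotientGroup.induction_on with | H b => ?_
        rw [← QuotientGroup.mk_mul, ← QuotientGroup.mk_mul, QuotientGroup.eq]
        have : ⁅(b : G)⁻¹, (a : G)⁻¹⁆ ∈ U :=
          hLL (Subgroup.commutator_mem_commutator (L.inv_mem b.2) (L.inv_mem a.2))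
        change (((a * b)⁻¹ * (b * a) : L) : G) ∈ U
        convert this using 1
        simp [commutatorElement_def, mul_assoc] }
  obtain ⟨x, hxL, hxU⟩ := SetLike.not_le_iff_exists.1 hLU
  haveI : NeZero ((Monoid.exponent (L ⧸ M) : ℕ) : ℂ) :=
    ⟨by exact_mod_cast Monoid.exponent_ne_zero_of_finite⟩
  obtain ⟨φ, hφ⟩ := CommGroup.exists_apply_ne_one_of_hasEnoughRootsOfUnity (L ⧸ M) ℂ
    (a := ((⟨x, hxL⟩ : L) : L ⧸ M)) (fun h => hxU (show (⟨x, hxL⟩ : L) ∈ M from (QuotientGroup.eq_one_iff _).1 h))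
  refine ⟨φ.comp (QuotientGroup.mk' M), fun h => hφ (DFunLike.congr_fun h ⟨x, hxL⟩), fun l hl => ?_⟩
  have : QuotientGroup.mk' M l = 1 := (QuotientGroup.eq_one_iff _).2 hl
  rw [MonoidHom.comp_apply, this, map_one]

variable [Fintype G]

lemma perm_weight {ρ : Representation ℂ G X} (hirr : Irr ρ) {X1 : Submodule ℂ X}
    (hX1 : IsBlock ρ X1) (L U : Subgroup G) (hU : stab ρ X1 ≤ U) (lam : L →* ℂˣ)
    (hlam : ∀ l : L, (l : G) ∈ U → lam l = 1) : ∃ T : X →ₗ[ℂ] X, T ≠ 0 ∧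
      ∀ l : L, ρ l * T * ρ (l : G)⁻¹ = ((lam l : ℂˣ) : ℂ) • T := by
  obtain ⟨T1, hT1, hT2⟩ := exists_proj hirr hX1
  let T : X →ₗ[ℂ] X := ∑ l : L, ∑ u : U, (((lam l)⁻¹ : ℂˣ) : ℂ) •
    (ρ ((l : G) * u) * T1 * ρ ((l : G) * u)⁻¹)
  refine ⟨T, ?_, fun l0 => ?_⟩
  · obtain ⟨x, hx, hx0⟩ := Submodule.exists_mem_ne_zero_of_ne_bot hX1.1
    have key : T x = ((∑ l : L, ∑ u : U, if (l : G) * u ∈ stab ρ X1 then 1 else 0 : ℕ) : ℂ) • x := by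
      simp only [T, LinearMap.sum_apply, Nat.cast_sum, Finset.sum_smul]
      refine Finset.sum_congr rfl fun l _ => Finset.sum_congr rfl fun u _ => ?_
      rw [LinearMap.smul_apply, Module.End.mul_apply, Module.End.mul_apply]
      by_cases h : (l : G) * u ∈ stab ρ X1
      · have hl : (l : G) ∈ U := by
          have := U.mul_mem (hU h) (U.inv_mem u.2)
          simpa using this
        have h1 : ρ ((l : G) * u)⁻¹ x ∈ X1 := by
          have := mem_tr (ρ := ρ) (g := ((l : G) * u)⁻¹) hx
          rwa [mem_stab.1 ((stab ρ X1).inv_mem h)] at this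
        rw [if_pos h, hlam l hl, hT1 _ h1, rho_apply_inv]
        simp
      · have h1 : ρ ((l : G) * u)⁻¹ x ∈ Yc ρ X1 X1 := by
          have h2 : tr ρ ((l : G) * u)⁻¹ X1 ≠ X1 := fun hh => h (by
            rw [← inv_inv ((l : G) * u)]
            exact (stab ρ X1).inv_mem hh)
          have h3 : tr ρ ((l : G) * u)⁻¹ X1 ≤ Yc ρ X1 X1 := le_iSup₂_of_le _ h2 le_rfl
          exact h3 (mem_tr hx)
        rw [if_neg h, hT2 _ h1]
        simp
    intro h
    rw [h, LinearMap.zero_apply] at key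
    have := (smul_eq_zero.1 key.symm).resolve_right hx0
    have h2 : (∑ l : L, ∑ u : U, if (l : G) * u ∈ stab ρ X1 then 1 else 0 : ℕ) = 0 := by
      exact_mod_cast this
    rw [Finset.sum_eq_zero_iff] at h2
    have h3 := h2 1 (Finset.mem_univ _)
    rw [Finset.sum_eq_zero_iff] at h3
    have h4 := h3 1 (Finset.mem_univ _)
    have h5 : ((1 : L) : G) * ((1 : U) : G) ∈ stab ρ X1 := by
      simpa using (stab ρ X1).one_mem
    rw [if_pos h5] at h4
    exact one_ne_zero h4
  · simp only [T, Finset.mul_sum, Finset.sum_mul, Finset.smul_sum]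
    rw [← Equiv.sum_comp (Equiv.mulLeft l0) (fun l : L => ∑ u : U, ((lam l0 : ℂˣ) : ℂ) •
      (((lam l)⁻¹ : ℂˣ) : ℂ) • (ρ ((l : G) * u) * T1 * ρ ((l : G) * u)⁻¹))]
    refine Finset.sum_congr rfl fun l _ => Finset.sum_congr rfl fun u _ => ?_
    have h1 : ((lam l0 : ℂˣ) : ℂ) • (((lam (Equiv.mulLeft l0 l))⁻¹ : ℂˣ) : ℂ) • (ρ (((Equiv.mulLeft l0 l : L) : G) * u) * T1 *
        ρ (((Equiv.mulLeft l0 l : L) : G) * u)⁻¹) = (((lam l)⁻¹ : ℂˣ) : ℂ) • (ρ (((l0 * l : L) : G) * u) * T1 *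
        ρ (((l0 * l : L) : G) * u)⁻¹) := by
      rw [Equiv.coe_mulLeft, smul_smul, ← Units.val_mul, map_mul lam, mul_inv_rev (lam l0),
        mul_comm (lam l)⁻¹, mul_inv_cancel_left]
    rw [h1, mul_smul_comm, smul_mul_assoc]
    congr 1
    rw [Subgroup.coe_mul, mul_assoc (l0 : G), mul_inv_rev (l0 : G), map_mul ρ (l0 : G), map_mul ρ _ (l0 : G)⁻¹]
    simp only [mul_assoc]

lemma perm_part [Group.IsSolvable G] [FiniteDimensional ℂ X] {ρ : Representation ℂ G X}
    (hirr : Irr ρ) {X1 : Submodule ℂ X}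
    (hX1 : IsBlock ρ X1) (S : Finset (G → ℂ)) (hS : ∀ α, α ∈ S ↔ α ∈ etaSet ρ.character)
    (U : Subgroup G) (hU : stab ρ X1 ≤ U) :
    dsr ⊤ ((11 + cB) * (S.filter fun α => Triv α U.normalCore).card) ≤ U.normalCore := by
  induction U using (wellFounded_gt (α := Subgroup G)).induction with | _ U ih => ?_
  by_cases htop : U = ⊤
  · have : U.normalCore = ⊤ := by
      rw [eq_top_iff]; exact Subgroup.normal_le_normalCore.2 htop.ge
    rw [this]; exact le_top
  obtain ⟨U', hc⟩ := exists_covBy_of_wellFoundedLT (a := U) (fun h => htop (isMax_iff_eq_top.1 h))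
  have ih' := ih U' hc.lt (hU.trans hc.le)
  have hcore : U.normalCore ≤ U'.normalCore := Subgroup.normalCore_mono hc.le
  by_cases hN : U'.normalCore ≤ U
  · have : U.normalCore = U'.normalCore :=
      le_antisymm hcore (Subgroup.normal_le_normalCore.2 hN)
    rwa [this]
  obtain ⟨L, hLn, hKL, hLN, hLL, hmin, hcov, hconj, hLU⟩ := cover_step U U' hc hN
  let W : Submodule ℤ (LinDual L) := AddSubgroup.toIntSubmodule
    { carrier := {lam | ∀ l : L, (l : G) ∈ U → lam.toHom l = 1}
      add_mem' := fun {a b} ha hb l hl => by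
        rw [LinDual.toHom_add, ha l hl, hb l hl, one_mul]
      zero_mem' := fun l _ => rfl
      neg_mem' := fun {a} ha l hl => by rw [LinDual.toHom_neg, ha l hl, inv_one] }
  have hWmem : ∀ lam, lam ∈ W ↔ ∀ l : L, (l : G) ∈ U → lam.toHom l = 1 := fun _ => Iff.rfl
  obtain ⟨lam0, hl1, hl2⟩ := exists_linchar L U
    (fun l hl => hconj l (U'.normalCore_le (hLN hl))) (hLL.trans U.normalCore_le) hLU
  set S' := S.filter (fun α => Triv α U.normalCore ∧ ¬ Triv α L) with hS'
  have hwt : ∀ lam ∈ W, lam ≠ 0 → ∃ α ∈ S', WtChar α L lam.toHom := by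
    intro lam hlam h0
    have h1 : lam.toHom ≠ 1 := fun h => h0 (LinDual.ext fun l => by rw [h]; rfl)
    obtain ⟨T, hT0, hT⟩ := perm_weight hirr hX1 L U hU lam.toHom hlam
    obtain ⟨α, hα, hw⟩ := weight_eta ρ h1 T hT0 hT
    refine ⟨α, ?_, hw⟩
    rw [hS', Finset.mem_filter]
    exact ⟨(hS α).2 hα, hw.triv hKL.le (fun l hl => hlam l (U.normalCore_le hl)),
      hw.not_triv h1⟩
  have hl0W : LinDual.mk lam0 ∈ W := hl2
  have hl00 : LinDual.mk lam0 ≠ 0 := fun h => hl1 (by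
    ext l
    have := congrArg (fun f : LinDual L => f.toHom l) h
    exact congrArg Units.val this)
  have hDL := chief_dual L U.normalCore U'.normalCore hKL.le hmin W
    (fun h => hl00 (by rw [h] at hl0W; exact hl0W))
    (fun lam hlam l hl => hlam l (U.normalCore_le hl))
    (fun n hn => by
      rintro _ ⟨lam, hlam, rfl⟩ l hl
      have hnl : n⁻¹ * l * n ∈ L ⊓ U := by
        have := hconj n⁻¹ (U'.inv_mem (U'.normalCore_le hn)) l ⟨l.2, hl⟩
        simpa using this
      rw [dualRep_apply L n lam l ⟨n⁻¹ * l * n, hnl.1⟩ rfl]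
      exact hlam _ hnl.2) S' hwt
  haveI := dsr_normal U'.normalCore (10 * S'.card + cB)
  have hDD := perm_step U U' L (dsr U'.normalCore (10 * S'.card + cB))
    ((dsr_le _ _).trans U'.normalCore_le) hcov hLL (hDL.trans U.normalCore_le)
  have hr : 1 ≤ S'.card := by
    obtain ⟨α, hα, _⟩ := hwt _ hl0W hl00
    exact Finset.card_pos.2 ⟨α, hα⟩
  have hcard : (S.filter fun α => Triv α U'.normalCore).card + S'.card ≤
      (S.filter fun α => Triv α U.normalCore).card := by
    rw [← Finset.card_union_of_disjoint]
    · apply Finset.card_le_card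
      intro α hα
      rw [Finset.mem_union, Finset.mem_filter, Finset.mem_filter] at hα
      rw [Finset.mem_filter]
      rcases hα with h | h
      · exact ⟨h.1, h.2.mono hcore⟩
      · exact ⟨h.1, h.2.1⟩
    · rw [Finset.disjoint_left]
      intro α h1 h2
      rw [Finset.mem_filter] at h1 h2
      exact h2.2.2 (h1.2.mono hLN)
  rw [← dsr_succ] at hDD
  set s := (S.filter fun α => Triv α U.normalCore).card
  set s' := (S.filter fun α => Triv α U'.normalCore).card
  have hle : (11 + cB) * s' + (10 * S'.card + cB + 1) ≤ (11 + cB) * s := by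
    calc (11 + cB) * s' + (10 * S'.card + cB + 1) ≤ (11 + cB) * s' + (11 + cB) * S'.card := by
          nlinarith [Nat.zero_le cB]
      _ = (11 + cB) * (s' + S'.card) := by ring
      _ ≤ _ := Nat.mul_le_mul_left _ hcard
  refine (dsr_anti _ hle).trans ?_
  rw [← dsr_add]
  exact (dsr_mono ih' _).trans hDD
end PermPart
end EtaDl

end

section
open scoped Classical BigOperators commutatorElement
namespace EtaDl
section PrimPart
variable {G : Type} [Group G] {X : Type} [AddCommGroup X] [Module ℂ X]

lemma mul_app (ρ : Representation ℂ G X) (g h : G) (x : X) : ρ (g * h) x = ρ g (ρ h x) := by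
  rw [map_mul]; rfl

lemma ext_block {ρ : Representation ℂ G X} (hirr : Irr ρ) {X1 : Submodule ℂ X} (h0 : X1 ≠ ⊥)
    {A B : X →ₗ[ℂ] X} (h : ∀ g, ∀ x ∈ X1, A (ρ g x) = B (ρ g x)) : A = B := by
  have h1 : (⊤ : Submodule ℂ X) ≤ LinearMap.eqLocus A B := by
    rw [← hirr.iSup_tr h0]
    refine iSup_le fun g => ?_
    rintro _ ⟨x, hx, rfl⟩
    exact h g x hx
  ext x
  exact h1 (Submodule.mem_top (x := x))

lemma exists_hom_of_scalar {Y : Type*} [AddCommGroup Y] [Module ℂ Y] (σ : Representation ℂ G Y)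
    (L : Subgroup G) (v : Y) (hv0 : v ≠ 0) (h : ∀ l : L, ∃ a : ℂ, σ l v = a • v) :
    ∃ lam : L →* ℂˣ, ∀ l : L, σ l v = ((lam l : ℂˣ) : ℂ) • v := by
  choose a ha using h
  have huniq : ∀ b c : ℂ, b • v = c • v → b = c := fun b c hbc => by
    have : (b - c) • v = 0 := by rw [sub_smul, hbc, sub_self]
    exact sub_eq_zero.1 ((smul_eq_zero.1 this).resolve_right hv0)
  let f : L →* ℂ :=
    { toFun := a
      map_one' := huniq _ _ (by rw [← ha]; simp)
      map_mul' := fun x y => huniq _ _ (by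
        rw [← ha, Subgroup.coe_mul, map_mul, Module.End.mul_apply, ha, map_smul, ha, smul_smul,
          mul_comm]) }
  exact ⟨f.toHomUnits, fun l => ha l⟩

lemma exists_common_eigen [FiniteDimensional ℂ X] (ρ : Representation ℂ G X) (L : Subgroup G)
    (X1 : Submodule ℂ X) (h0 : X1 ≠ ⊥) (hL : ∀ l ∈ L, tr ρ l X1 ≤ X1)
    (hcomm : ∀ l ∈ L, ∀ m ∈ L, ∀ x ∈ X1, ρ l (ρ m x) = ρ m (ρ l x)) :
    ∃ v ∈ X1, v ≠ 0 ∧ ∀ l : L, ∃ a : ℂ, ρ l v = a • v := by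
  obtain ⟨M, ⟨hM, hM0, hML⟩, hmin⟩ := (wellFounded_lt (α := Submodule ℂ X)).has_min
    {U | U ≤ X1 ∧ U ≠ ⊥ ∧ ∀ l ∈ L, tr ρ l U ≤ U} ⟨X1, le_rfl, h0, hL⟩
  obtain ⟨v, hv, hv0⟩ := Submodule.exists_mem_ne_zero_of_ne_bot hM0
  refine ⟨v, hM hv, hv0, fun l => ?_⟩
  haveI : Nontrivial M := Submodule.nontrivial_iff_ne_bot.2 hM0
  let f : Module.End ℂ M := (ρ (l : G)).restrict (fun x hx => hML l l.2 (mem_tr hx))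
  obtain ⟨a, ha⟩ := Module.End.exists_eigenvalue f
  obtain ⟨w, hw⟩ := ha.exists_hasEigenvector
  have hw1 : ρ (l : G) (w : X) = a • (w : X) := by
    have := hw.apply_eq_smul
    exact congrArg Subtype.val this
  let E : Submodule ℂ X := 
    { carrier := {x | x ∈ M ∧ ρ (l : G) x = a • x}
      add_mem' := fun {x y} hx hy => ⟨M.add_mem hx.1 hy.1, by rw [map_add, hx.2, hy.2, smul_add]⟩
      zero_mem' := ⟨M.zero_mem, by rw [map_zero, smul_zero]⟩
      smul_mem' := fun c x hx => ⟨M.smul_mem _ hx.1, by rw [map_smul, hx.2, smul_comm]⟩ }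
  have hEM : E ≤ M := fun x hx => hx.1
  have hE0 : E ≠ ⊥ := fun h => hw.2 (by
    have : (w : X) ∈ E := ⟨w.2, hw1⟩
    rw [h] at this
    exact Subtype.ext this)
  have hEM' : E = M := by
    by_contra hne
    refine hmin E ⟨hEM.trans hM, hE0, fun m hm => ?_⟩ (lt_of_le_of_ne hEM hne)
    rintro _ ⟨x, hx, rfl⟩
    exact ⟨hML m hm (mem_tr hx.1), by
      rw [hcomm l l.2 m hm x (hM hx.1), hx.2, map_smul]⟩
  have : v ∈ E := hEM' ▸ hv
  exact ⟨a, this.2⟩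

variable [Fintype G]

/-- abelian normal subgroups in the stabiliser act as scalars on minimal blocks -/
lemma scalar_of_comm [FiniteDimensional ℂ X] {ρ : Representation ℂ G X} {X1 : Submodule ℂ X}
    (hX1 : IsBlock ρ X1) (hmin : ∀ W, IsBlock ρ W → W ≤ X1 → W = X1) (L : Subgroup G) [L.Normal]
    (hL : L ≤ stab ρ X1)
    (hcomm : ∀ l ∈ L, ∀ m ∈ L, ∀ x ∈ X1, ρ l (ρ m x) = ρ m (ρ l x)) :
    ∃ lam : L →* ℂˣ, ∀ l : L, ∀ x ∈ X1, ρ l x = ((lam l : ℂˣ) : ℂ) • x := by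
  obtain ⟨v, hv, hv0, hvl⟩ := exists_common_eigen ρ L X1 hX1.1
    (fun l hl => (mem_stab.1 (hL hl)).le) hcomm
  obtain ⟨lam, hlam⟩ := exists_hom_of_scalar ρ L v hv0 hvl
  refine ⟨lam, ?_⟩
  let W : Submodule ℂ X := 
    { carrier := {x | x ∈ X1 ∧ ∀ l : L, ρ l x = ((lam l : ℂˣ) : ℂ) • x}
      add_mem' := fun {x y} hx hy => ⟨X1.add_mem hx.1 hy.1, fun l => by
        rw [map_add, hx.2, hy.2, smul_add]⟩
      zero_mem' := ⟨X1.zero_mem, fun l => by rw [map_zero, smul_zero]⟩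
      smul_mem' := fun c x hx => ⟨X1.smul_mem _ hx.1, fun l => by
        rw [map_smul, hx.2, smul_comm]⟩ }
  have hWX : W ≤ X1 := fun x hx => hx.1
  have hWb : IsBlock ρ W := by
    refine hX1.refine hWX (fun h => hv0 ?_) ?_
    · have : v ∈ W := ⟨hv, hlam⟩
      rw [h] at this; exact this
    let e : X →ₗ[ℂ] X := ∑ l : L, (((lam l)⁻¹ : ℂˣ) : ℂ) • ρ l
    have hker : (⨆ (g : G) (_ : tr ρ g X1 = X1 ∧ tr ρ g W ≠ W), tr ρ g W) ≤ LinearMap.ker e := by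
      refine iSup₂_le fun g hg => ?_
      rintro _ ⟨x, hx, rfl⟩
      set nu : L →* ℂˣ := (dualRep L g (LinDual.mk lam)).toHom with hnu
      have hnul : ∀ y ∈ W, ∀ l : L, ρ l (ρ g y) = ((nu l : ℂˣ) : ℂ) • ρ g y := fun y hy l => by
        have hmem : g⁻¹ * l * g ∈ L := by
          have := ‹L.Normal›.conj_mem l l.2 g⁻¹
          simpa using this
        have h1 : nu l = lam ⟨g⁻¹ * l * g, hmem⟩ :=
          dualRep_apply L g (LinDual.mk lam) l ⟨_, hmem⟩ rfl
        have h2 := hy.2 ⟨g⁻¹ * l * g, hmem⟩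
        rw [h1, ← map_smul, ← h2, ← mul_app, ← mul_app]
        congr 2
        group
      by_cases hnl : nu = lam
      · exfalso
        apply hg.2
        have hle : tr ρ g W ≤ W := by
          rintro _ ⟨y, hy, rfl⟩
          refine ⟨hg.1 ▸ mem_tr hy.1, fun l => ?_⟩
          rw [← hnl]; exact hnul y hy l
        exact Submodule.eq_of_le_of_finrank_eq hle
          (LinearEquiv.finrank_map_eq (LinearEquiv.ofLinear (ρ g) (ρ g⁻¹)
            (by ext y; simp [rho_apply_inv]) (by ext y; simp [rho_inv_apply])) W)
      · have hf : ((Units.coeHom ℂ).comp (lam⁻¹ * nu) : L →* ℂ) ≠ 1 := by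
          intro h
          apply hnl
          ext l
          have := DFunLike.congr_fun h l
          have h3 : (lam l)⁻¹ * nu l = 1 := Units.ext this
          rw [inv_mul_eq_one] at h3
          rw [h3]
        have := sum_hom_units_eq_zero _ hf
        rw [LinearMap.mem_ker]
        simp only [e, LinearMap.sum_apply, LinearMap.smul_apply, hnul x hx, smul_smul,
          ← Finset.sum_smul]
        have h4 : ∑ l : L, (((lam l)⁻¹ : ℂˣ) : ℂ) * ((nu l : ℂˣ) : ℂ) = 0 := by
          rw [← this]; refine Finset.sum_congr rfl fun l _ => ?_
          simp
        rw [h4, zero_smul]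
    rw [Submodule.disjoint_def]
    intro x hx hx'
    have h1 : e x = 0 := hker hx'
    have h2 : e x = (Fintype.card L : ℂ) • x := by
      simp only [e, LinearMap.sum_apply, LinearMap.smul_apply, hx.2, smul_smul]
      simp [Finset.card_univ, Nat.cast_smul_eq_nsmul]
    rw [h2] at h1
    exact (smul_eq_zero.1 h1).resolve_left (by exact_mod_cast Fintype.card_ne_zero)
  have := hmin W hWb hWX
  intro l x hx
  have hx' : x ∈ W := this ▸ hx
  exact hx'.2 l

/-- elements of the core acting as scalars on all conjugates of the block -/
def scal (ρ : Representation ℂ G X) (X1 : Submodule ℂ X) : Subgroup G where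
  carrier := {c | c ∈ (stab ρ X1).normalCore ∧
    ∀ g, ∃ a : ℂˣ, ∀ x ∈ X1, ρ c (ρ g x) = (a : ℂ) • ρ g x}
  one_mem' := ⟨Subgroup.one_mem _, fun g => ⟨1, fun x _ => by simp⟩⟩
  mul_mem' := by
    rintro c d ⟨hc, hc'⟩ ⟨hd, hd'⟩
    refine ⟨Subgroup.mul_mem _ hc hd, fun g => ?_⟩
    obtain ⟨a, ha⟩ := hc' g
    obtain ⟨b, hb⟩ := hd' g
    refine ⟨a * b, fun x hx => ?_⟩
    rw [mul_app, hb x hx, map_smul, ha x hx, smul_smul, mul_comm, Units.val_mul]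
  inv_mem' := by
    rintro c ⟨hc, hc'⟩
    refine ⟨Subgroup.inv_mem _ hc, fun g => ?_⟩
    obtain ⟨a, ha⟩ := hc' g
    refine ⟨a⁻¹, fun x hx => ?_⟩
    have h1 := congrArg (ρ c⁻¹) (ha x hx)
    rw [rho_inv_apply, map_smul] at h1
    conv_rhs => rw [h1]
    rw [smul_smul]
    simp

lemma scal_normal (ρ : Representation ℂ G X) (X1 : Submodule ℂ X) : (scal ρ X1).Normal := by
  refine ⟨?_⟩
  rintro c ⟨hc, hc'⟩ h
  refine ⟨(Subgroup.normalCore_normal _).conj_mem c hc h, fun g => ?_⟩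
  obtain ⟨a, ha⟩ := hc' (h⁻¹ * g)
  refine ⟨a, fun x hx => ?_⟩
  have := congrArg (ρ h) (ha x hx)
  rw [map_smul, ← mul_app, ← mul_app, ← mul_app, mul_inv_cancel_left] at this
  rw [← mul_app, ← this]
  congr 2
  group

lemma scal_le (ρ : Representation ℂ G X) (X1 : Submodule ℂ X) :
    scal ρ X1 ≤ (stab ρ X1).normalCore := fun _ h => h.1

lemma scal_comm {ρ : Representation ℂ G X} (hirr : Irr ρ) {X1 : Submodule ℂ X} (h0 : X1 ≠ ⊥) :
    ⁅scal ρ X1, (stab ρ X1).normalCore⁆ ≤ MonoidHom.ker ρ := by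
  rw [Subgroup.commutator_le]
  rintro k ⟨_, hk⟩ c hc
  have : ρ k * ρ c = ρ c * ρ k := by
    refine ext_block hirr h0 fun g x hx => ?_
    obtain ⟨a, ha⟩ := hk g
    have hgc : g⁻¹ * c * g ∈ stab ρ X1 := by
      have := (Subgroup.normalCore_normal (stab ρ X1)).conj_mem c hc g⁻¹
      exact (stab ρ X1).normalCore_le (by simpa using this)
    have h1 : ρ (g⁻¹ * c * g) x ∈ X1 := by
      have := mem_tr (ρ := ρ) (g := g⁻¹ * c * g) hx
      rwa [mem_stab.1 hgc] at this
    have h2 : ρ c (ρ g x) = ρ g (ρ (g⁻¹ * c * g) x) := by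
      rw [← mul_app, ← mul_app]; congr 2; group
    rw [Module.End.mul_apply, Module.End.mul_apply, h2, ha _ h1, ← h2, ha x hx, map_smul]
  rw [MonoidHom.mem_ker, commutatorElement_def, map_mul, map_mul, map_mul, this, mul_assoc,
    mul_assoc, ← mul_assoc (ρ k), ← map_mul ρ k, mul_inv_cancel, map_one, one_mul, ← map_mul,
    mul_inv_cancel, map_one]

lemma prim_chief [Group.IsSolvable G] [FiniteDimensional ℂ X] {ρ : Representation ℂ G X}
    (hirr : Irr ρ) {X1 : Submodule ℂ X}
    (hX1 : IsBlock ρ X1) (S : Finset (G → ℂ)) (hS : ∀ α, α ∈ S ↔ α ∈ etaSet ρ.character)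
    (L : Subgroup G) [L.Normal] (hKL : scal ρ X1 ≤ L) (hLC : L ≤ (stab ρ X1).normalCore)
    (hLL : ⁅L, L⁆ ≤ scal ρ X1)
    (hchief : ∀ M : Subgroup G, M.Normal → scal ρ X1 ≤ M → M ≤ L → M = scal ρ X1 ∨ M = L)
    (hnc : ¬ ∀ l ∈ L, ∀ m ∈ L, ∀ x ∈ X1, ρ l (ρ m x) = ρ m (ρ l x)) :
    ⁅dsr (stab ρ X1).normalCore (10 * S.card + cB), L⁆ ≤ scal ρ X1 := by
  haveI := scal_normal ρ X1
  have hLH : L ≤ stab ρ X1 := hLC.trans (Subgroup.normalCore_le _)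
  have hpres : ∀ h ∈ stab ρ X1, ∀ x ∈ X1, ρ h x ∈ X1 := fun h hh x hx => by
    have := mem_tr (ρ := ρ) (g := h) hx
    rwa [mem_stab.1 hh] at this
  have hpresY : ∀ h ∈ stab ρ X1, ∀ x ∈ Yc ρ X1 X1, ρ h x ∈ Yc ρ X1 X1 := fun h hh x hx => by
    have := mem_tr (ρ := ρ) (g := h) hx
    rwa [tr_Yc, mem_stab.1 hh] at this
  have hc := hirr.isCompl hX1
  have hext : ∀ A B : X →ₗ[ℂ] X, (∀ x ∈ X1, A x = B x) → (∀ x ∈ Yc ρ X1 X1, A x = B x) →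
      A = B := fun A B h1 h2 => by
    ext x
    have : x ∈ X1 ⊔ Yc ρ X1 X1 := hc.sup_eq_top ▸ Submodule.mem_top
    obtain ⟨a, ha, b, hb, rfl⟩ := Submodule.mem_sup.1 this
    rw [map_add, map_add, h1 a ha, h2 b hb]
  obtain ⟨T1, hT1, hT2⟩ := exists_proj hirr hX1
  obtain ⟨x0, hx0, hx00⟩ := Submodule.exists_mem_ne_zero_of_ne_bot hX1.1
  have hne : ∀ g, ρ g x0 ≠ 0 := fun g h => hx00 (by
    rw [← rho_inv_apply ρ g x0, h, map_zero])
  have hT0 : ∀ g, ρ g * T1 ≠ 0 := fun g h => hne g (by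
    have := LinearMap.congr_fun h x0
    rwa [Module.End.mul_apply, hT1 _ hx0] at this)
  let W : Submodule ℤ (LinDual L) := AddSubgroup.toIntSubmodule
    { carrier := {lam | ∃ m ∈ L, ∀ l : L, ∀ x ∈ X1,
        ρ l (ρ m x) = ((lam.toHom l : ℂˣ) : ℂ) • ρ m (ρ l x)}
      add_mem' := by
        rintro a b ⟨m, hm, hm'⟩ ⟨n, hn, hn'⟩
        refine ⟨m * n, L.mul_mem hm hn, fun l x hx => ?_⟩
        rw [mul_app, hm' l _ (hpres n (hLH hn) x hx), hn' l x hx, map_smul, smul_smul, mul_app,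
          LinDual.toHom_add, Units.val_mul]
      zero_mem' := ⟨1, L.one_mem, fun l x hx => by simp [LinDual.toHom_zero]⟩
      neg_mem' := by
        rintro a ⟨m, hm, hm'⟩
        refine ⟨m⁻¹, L.inv_mem hm, fun l x hx => ?_⟩
        have h1 := hm' l _ (hpres m⁻¹ (hLH (L.inv_mem hm)) x hx)
        rw [rho_apply_inv] at h1
        rw [h1, map_smul, rho_inv_apply, smul_smul, LinDual.toHom_neg, ← Units.val_mul,
          inv_mul_cancel, Units.val_one, one_smul] }
  have hWmem : ∀ lam, lam ∈ W ↔ ∃ m ∈ L, ∀ l : L, ∀ x ∈ X1,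
        ρ l (ρ m x) = ((lam.toHom l : ℂˣ) : ℂ) • ρ m (ρ l x) := fun _ => Iff.rfl
  push Not at hnc
  obtain ⟨l1, hl1, m, hm, x1, hx1, hnc⟩ := hnc
  obtain ⟨lam, hlam⟩ := exists_hom_of_scalar (Representation.linHom ρ ρ) L (ρ m * T1) (hT0 m)
    (fun l => by
      have hcm : ⁅(l : G), m⁆ ∈ scal ρ X1 :=
        hLL (Subgroup.commutator_mem_commutator l.2 hm)
      obtain ⟨a, ha⟩ := hcm.2 1
      refine ⟨a, ?_⟩
      rw [Representation.linHom_apply]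
      refine hext _ _ (fun x hx => ?_) (fun x hx => ?_)
      · change ρ (l : G) (ρ m (T1 (ρ (l : G)⁻¹ x))) = (a : ℂ) • ρ m (T1 x)
        rw [hT1 _ hx, hT1 _ (hpres _ (hLH (L.inv_mem l.2)) x hx)]
        have h1 := ha (ρ m x) (hpres m (hLH hm) x hx)
        rw [map_one, Module.End.one_apply] at h1
        rw [← h1, ← mul_app, ← mul_app, ← mul_app]
        congr 2
        rw [commutatorElement_def]; group
      · change ρ (l : G) (ρ m (T1 (ρ (l : G)⁻¹ x))) = (a : ℂ) • ρ m (T1 x)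
        rw [hT2 _ hx, hT2 _ (hpresY _ (hLH (L.inv_mem l.2)) x hx)]
        simp)
  have hlamW : LinDual.mk lam ∈ W := by
    refine ⟨m, hm, fun l x hx => ?_⟩
    have h1 := LinearMap.congr_fun (hlam l) (ρ l x)
    rw [Representation.linHom_apply] at h1
    change ρ (l : G) (ρ m (T1 (ρ (l : G)⁻¹ (ρ (l : G) x)))) =
      ((lam l : ℂˣ) : ℂ) • ρ m (T1 (ρ (l : G) x)) at h1
    rw [rho_inv_apply, hT1 _ hx, hT1 _ (hpres _ (hLH l.2) x hx)] at h1
    exact h1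
  have hW0 : W ≠ ⊥ := fun h => by
    have h1 : LinDual.mk lam = 0 := by rw [h] at hlamW; exact hlamW
    obtain ⟨l, hl, x, hx, hne⟩ : ∃ l ∈ L, ∃ x ∈ X1, ρ l (ρ m x) ≠ ρ m (ρ l x) :=
      ⟨l1, hl1, x1, hx1, hnc⟩
    have h2 := LinearMap.congr_fun (hlam ⟨l, hl⟩) (ρ l x)
    rw [Representation.linHom_apply] at h2
    change ρ (l : G) (ρ m (T1 (ρ (l : G)⁻¹ (ρ (l : G) x)))) =
      ((lam ⟨l, hl⟩ : ℂˣ) : ℂ) • ρ m (T1 (ρ (l : G) x)) at h2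
    have h3 : lam ⟨l, hl⟩ = 1 := congrArg (fun f : LinDual L => f.toHom ⟨l, hl⟩) h1
    rw [rho_inv_apply, hT1 _ hx, hT1 _ (hpres _ (hLH hl) x hx), h3, Units.val_one, one_smul] at h2
    exact hne h2
  refine chief_dual L (scal ρ X1) _ hKL hchief W hW0 ?_ ?_ S ?_
  · rintro lam ⟨m, hm, hm'⟩ l ⟨_, hl⟩
    obtain ⟨a, ha⟩ := hl 1
    simp only [map_one, Module.End.one_apply] at ha
    have h1 := hm' l x0 hx0
    rw [ha _ (hpres m (hLH hm) _ hx0), ha _ hx0, map_smul, smul_smul] at h1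
    have h2 : ((lam.toHom l * a - a : ℂ)) • ρ m x0 = 0 := by
      rw [sub_smul, ← h1, sub_self]
    have h3 := (smul_eq_zero.1 h2).resolve_right (hne m)
    have h4 : lam.toHom l * a = a := Units.ext (by
      rw [Units.val_mul]; exact sub_eq_zero.1 h3)
    exact mul_eq_right.1 h4
  · intro c hc
    rintro _ ⟨lam, ⟨m, hm, hm'⟩, rfl⟩
    have hcH : c ∈ stab ρ X1 := Subgroup.normalCore_le _ hc
    refine ⟨c * m * c⁻¹, ‹L.Normal›.conj_mem m hm c, fun l x hx => ?_⟩
    have hmem : c⁻¹ * l * c ∈ L := by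
      have := ‹L.Normal›.conj_mem l l.2 c⁻¹
      simpa using this
    rw [dualRep_apply L c lam l ⟨c⁻¹ * l * c, hmem⟩ rfl]
    have h1 := congrArg (ρ c) (hm' ⟨c⁻¹ * l * c, hmem⟩ (ρ c⁻¹ x)
      (hpres _ ((stab ρ X1).inv_mem hcH) x hx))
    rw [map_smul] at h1
    simp only [← mul_app] at h1 ⊢
    convert h1 using 3
    · group
    · congr 1; group
  · rintro lam ⟨m, hm, hm'⟩ h0
    have h1 : lam.toHom ≠ 1 := fun h => h0 (LinDual.ext fun l => by rw [h]; rfl)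
    obtain ⟨α, hα, hw⟩ := weight_eta ρ h1 (ρ m * T1) (hT0 m) (fun l => by
      refine hext _ _ (fun x hx => ?_) (fun x hx => ?_)
      · change ρ (l : G) (ρ m (T1 (ρ (l : G)⁻¹ x))) = ((lam.toHom l : ℂˣ) : ℂ) • ρ m (T1 x)
        have h2 := hpres _ (hLH (L.inv_mem l.2)) x hx
        rw [hT1 _ hx, hT1 _ h2, hm' l _ h2, rho_apply_inv]
      · change ρ (l : G) (ρ m (T1 (ρ (l : G)⁻¹ x))) = ((lam.toHom l : ℂˣ) : ℂ) • ρ m (T1 x)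
        rw [hT2 _ hx, hT2 _ (hpresY _ (hLH (L.inv_mem l.2)) x hx)]
        simp)
    exact ⟨α, (hS α).2 hα, hw⟩

lemma three_sub (Z D L : Subgroup G) [Z.Normal] (h : ⁅⁅D, L⁆, D⁆ ≤ Z) : ⁅⁅D, D⁆, L⁆ ≤ Z := by
  have key : ∀ A : Subgroup G, A ≤ Z ↔ A.map (QuotientGroup.mk' Z) = ⊥ := fun A => by
    rw [Subgroup.map_eq_bot_iff, QuotientGroup.ker_mk']
  rw [key, Subgroup.map_commutator, Subgroup.map_commutator] at *
  exact Subgroup.commutator_commutator_eq_bot_of_rotate h (by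
    rw [Subgroup.commutator_comm (L.map _)]; exact h)

lemma prim_part [Group.IsSolvable G] [FiniteDimensional ℂ X] {ρ : Representation ℂ G X}
    (hirr : Irr ρ) {X1 : Submodule ℂ X}
    (hX1 : IsBlock ρ X1) (hmin : ∀ W, IsBlock ρ W → W ≤ X1 → W = X1)
    (S : Finset (G → ℂ)) (hS : ∀ α, α ∈ S ↔ α ∈ etaSet ρ.character) :
    dsr (stab ρ X1).normalCore (10 * S.card + cB + 2) ≤ MonoidHom.ker ρ := by
  haveI := scal_normal ρ X1
  haveI := dsr_normal (stab ρ X1).normalCore (10 * S.card + cB)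
  have hsc := scal_comm hirr hX1.1
  set C := (stab ρ X1).normalCore with hC
  set D := dsr C (10 * S.card + cB) with hD
  have hDC : D ≤ C := dsr_le _ _
  have hEK : ⁅D, D⁆ ≤ scal ρ X1 := by
    by_contra hE
    obtain ⟨L, hLn, hKL, hLE, hLL, hch⟩ := exists_chief (scal ρ X1) ⁅D, D⁆ hE
    have hLC : L ≤ C := hLE.trans (sup_le ((comm_self_le D).trans hDC) (scal_le ρ X1))
    by_cases hnc : ∀ l ∈ L, ∀ m ∈ L, ∀ x ∈ X1, ρ l (ρ m x) = ρ m (ρ l x)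
    · obtain ⟨lam, hlam⟩ := scalar_of_comm hX1 hmin L (hLC.trans (Subgroup.normalCore_le _)) hnc
      refine absurd ?_ (not_le_of_gt hKL)
      intro l hl
      refine ⟨hLC hl, fun g => ?_⟩
      have hmem : g⁻¹ * l * g ∈ L := by
        have := hLn.conj_mem l hl g⁻¹
        simpa using this
      refine ⟨lam ⟨_, hmem⟩, fun x hx => ?_⟩
      rw [← map_smul, ← hlam ⟨_, hmem⟩ x hx, ← mul_app, ← mul_app]
      congr 2
      group
    · have hDL : ⁅D, L⁆ ≤ scal ρ X1 := prim_chief hirr hX1 S hS L hKL.le hLC hLL hch hnc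
      have h1 : ⁅⁅D, D⁆, L⁆ ≤ MonoidHom.ker ρ := 
        three_sub _ D L ((Subgroup.commutator_mono hDL hDC).trans hsc)
      have h2 : ⁅scal ρ X1, L⁆ ≤ MonoidHom.ker ρ := (Subgroup.commutator_mono le_rfl hLC).trans hsc
      have h3 : ⁅L, L⁆ ≤ MonoidHom.ker ρ :=
        (Subgroup.commutator_mono hLE le_rfl).trans (comm_sup_le h1 h2)
      apply hnc
      intro l hl m hm x hx
      have h4 : ⁅l, m⁆ ∈ MonoidHom.ker ρ := h3 (Subgroup.commutator_mem_commutator hl hm)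
      have h5 : l * m = ⁅l, m⁆ * (m * l) := by rw [commutatorElement_def]; group
      rw [← mul_app, h5, map_mul, MonoidHom.mem_ker.1 h4, one_mul, mul_app]
  rw [show 10 * S.card + cB + 2 = (10 * S.card + cB + 1) + 1 from rfl, dsr_succ, dsr_succ, ← hD]
  exact (Subgroup.commutator_mono hEK ((comm_self_le D).trans hDC)).trans hsc

theorem main_bound [Group.IsSolvable G] [FiniteDimensional ℂ X] {ρ : Representation ℂ G X}
    (hirr : Irr ρ) :
    dsr ⊤ ((21 + cB) * (etaSet ρ.character).ncard + (cB + 2)) ≤ MonoidHom.ker ρ := by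
  haveI := hirr.1
  obtain ⟨X1, hX1, hmin⟩ := exists_min_block ρ
  set S := (etaSet_finite ρ.character).toFinset with hS
  have hS' : ∀ α, α ∈ S ↔ α ∈ etaSet ρ.character := fun α => Set.Finite.mem_toFinset _
  have hcard : (etaSet ρ.character).ncard = S.card := Set.ncard_eq_toFinset_card _ _
  have h1 := perm_part hirr hX1 S hS' _ le_rfl
  have h2 := prim_part hirr hX1 hmin S hS'
  set s := (S.filter fun α => Triv α (stab ρ X1).normalCore).card with hs
  have hle : s ≤ S.card := Finset.card_filter_le _ _
  have h3 : (11 + cB) * s + (10 * S.card + cB + 2) ≤ (21 + cB) * S.card + (cB + 2) := by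
    have := Nat.mul_le_mul_left (11 + cB) hle
    nlinarith
  rw [hcard]
  refine (dsr_anti _ h3).trans ?_
  rw [← dsr_add]
  exact (dsr_mono h1 _).trans h2
end PrimPart
end EtaDl

end

section
open scoped Classical BigOperators
namespace EtaDl

lemma final_bound (G : Type) [Group G] [Fintype G] [Group.IsSolvable G] (V : FDRep ℂ G)
    (hV : CategoryTheory.Simple V) (K : Subgroup G) [K.Normal]
    (hK : (K : Set G) = charKer G V.character) :
    derivedLength (G ⧸ K) ≤ (21 + cB) * etaChar G V.character + (cB + 2) := by
  have hb : dsr (⊤ : Subgroup G) ((21 + cB) * (etaSet V.character).ncard + (cB + 2)) ≤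
      MonoidHom.ker V.ρ := main_bound (irr_of_simple V hV)
  have he : etaChar G V.character = (etaSet V.character).ncard := rfl
  rw [← he] at hb
  generalize (21 + cB) * etaChar G V.character + (cB + 2) = n at hb ⊢
  have hker : MonoidHom.ker V.ρ ≤ K := by
    intro g hg
    have hg' : g ∈ (K : Set G) := by
      rw [hK]
      show V.character g = V.character 1
      have h1 : V.ρ g = V.ρ 1 := by rw [map_one]; exact hg
      show LinearMap.trace ℂ V (V.ρ g) = LinearMap.trace ℂ V (V.ρ 1)
      rw [h1]
    exact hg'
  have hle : dsr (⊤ : Subgroup G) n ≤ K := hb.trans hker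
  have hbot : derivedSeries (G ⧸ K) n = ⊥ := by
    rw [← dsr_top, ← Subgroup.map_top_of_surjective (QuotientGroup.mk' K)
      (QuotientGroup.mk'_surjective K), ← map_dsr, Subgroup.map_eq_bot_iff, QuotientGroup.ker_mk']
    exact hle
  exact Nat.sInf_le hbot

end EtaDl

end

/-- Theorem A: there are universal constants `C`, `D` such that for every finite
solvable group `G` and every `χ ∈ Irr(G)`, `dl(G/Ker χ) ≤ C·η(χ) + D`. -/
theorem derivedLength_le_linear_eta :
    ∃ C D : ℝ, ∀ (G : Type) [Group G] [Fintype G], IsSolvable G →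
      ∀ χ : G → ℂ, IsIrrChar G χ →
      ∀ (K : Subgroup G) [K.Normal], (K : Set G) = charKer G χ →
      (derivedLength (G ⧸ K) : ℝ) ≤ C * (etaChar G χ : ℝ) + D := by
  refine ⟨((21 + EtaDl.cB : ℕ) : ℝ), ((EtaDl.cB + 2 : ℕ) : ℝ), ?_⟩
  intro G _ _ hsol χ hχ K _ hK
  haveI : Group.IsSolvable G := hsol
  obtain ⟨V, hV, rfl⟩ := hχ
  exact_mod_cast EtaDl.final_bound G V hV K hK
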